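/- arXiv:1211.6630 — 4 statements merged into one kernel-verified Lean document; each statement's English description precedes it below -/
import Mathlib

section
/- Let n ≥ 4 and let σ be a permutation of {1,…,n} with m_1 fixed points. Then the number of pairs (α,β) of permutations of {1,…,n} with α of cycle type (n), β of cycle type (n−2,1,1), and α·β = σ, equals (1 + ε(σ)) · (n−3)! · (n − m_1)/2. -/
/-!
The pair `(α, β)` is determined by the `n`-cycle `α⁻¹`, so the task is to count the `n`-cycles `α`
for which `α σ` is an `(n-2)`-cycle. Write `IsFull S α` when `α` fixes the complement of `S` and
permutes `S` in one orbit. Everything rests on the splicing lemma `isFull_splice`: if `γ f = f`,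
then `γ` is full on `S \ {f}` exactly when `γ (f x)` is full on `S`, for any `x ∈ S \ {f}`.

The core is `cnt_odd`: an odd permutation `σ` of a set `S` of `k + 2` points has exactly `2 k!`
pairs `(α, b)` with `α` full on `S` and `α σ` full on `S \ {b}`, whatever its cycle type. The proof
is by induction on `k`. Take `f` with `g = σ f ≠ f`, let `S' = S \ {f}`, let `σ' = (f g) σ`, an even
permutation fixing `f`, and write `α = α' (f x)` with `α'` full on `S'`. If `x = g`, then
`α σ = α' σ'` fixes `f`, so `b = f` and `α' σ'` is full on `S'`; let `N` be the number of such `α'`.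
If `x ≠ g`, then `α σ = γ (f y)` with `γ = α' (g x) σ'` and `y = σ'⁻¹ x`, so that `γ` is full on
`S' \ {b}` with `b ≠ y`. Since `(g x) σ'` is odd, induction gives `2 (k-1)!` pairs `(α', b)` for each
of the `k` values of `x ≠ g`, before the pairs with `b = y` are removed. By splicing once more
(`sum_unsplice`), the number removed is exactly `N`, and the total is `N + k · 2 (k-1)! - N = 2 k!`.

For the theorem, mark an ordered pair `(f, b)` of fixed points of the `(n-2)`-cycle `α σ`, which
counts each `α` twice. If `σ` fixes `f` there is no such `α`. Otherwise only `x = g` is possible above,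
and removing `f` leaves the count of `cnt_odd` for `σ'` on `n - 1` points: `2 (n-3)!` if `σ` is even
and `0` if it is odd. Summing over the `n - m₁` points moved by `σ` gives twice the answer.
-/

/-- The multiset of orbit sizes of a permutation of `Fin n`
(fixed points contribute parts equal to `1`). -/
def fullCycleType {n : ℕ} (σ : Equiv.Perm (Fin n)) : Multiset ℕ :=
  σ.cycleType + Multiset.replicate (n - σ.cycleType.sum) 1

open Equiv Equiv.Perm Finset

/-! ### Full cycles on a finite set and splicing -/

/-- `IsFull S α`: the permutation `α` fixes every point outside `S` and permutes `S` in a single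
orbit. When `S` is a singleton this says `α = 1`, so a fixed point may play the role of a cycle. -/
def IsFull {X : Type*} (S : Finset X) (α : Perm X) : Prop :=
  (∀ z, z ∉ S → α z = z) ∧ ∀ a ∈ S, ∀ b ∈ S, SameCycle α a b

lemma perm_apply_inv {X : Type*} (σ : Perm X) (x : X) : σ (σ⁻¹ x) = x := by simp

lemma perm_inv_apply {X : Type*} (σ : Perm X) (x : X) : σ⁻¹ (σ x) = x := by simp

/-- A map `r` that sends each step of `δ` into an orbit of `γ` sends orbits of `δ` into orbits of `γ`. -/
lemma sameCycle_map {X : Type*} {γ δ : Perm X} (r : X → X)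
    (h : ∀ z, SameCycle γ (r z) (r (δ z))) {a b : X} (hab : SameCycle δ a b) :
    SameCycle γ (r a) (r b) := by
  obtain ⟨i, rfl⟩ := hab
  induction i using Int.induction_on with
  | zero => simpa using SameCycle.refl γ (r a)
  | succ i ih =>
    refine ih.trans ?_
    have := h ((δ ^ (i : ℤ)) a)
    rwa [← Perm.mul_apply, ← zpow_one_add, add_comm] at this
  | pred i ih =>
    refine ih.trans ?_
    have := h ((δ ^ (-(i : ℤ) - 1)) a)
    rw [← Perm.mul_apply, ← zpow_one_add, show 1 + (-(i : ℤ) - 1) = -i by ring] at this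
    exact this.symm

lemma IsFull.ne {X : Type*} {S : Finset X} {α : Perm X} (h : IsFull S α) (hS : 2 ≤ S.card) {z : X}
    (hz : z ∈ S) : α z ≠ z := by
  intro hfix
  obtain ⟨w, hw, hne⟩ := exists_mem_ne (by omega : 1 < S.card) z
  exact hne ((h.2 z hz w hw).eq_of_left hfix).symm

lemma IsFull.inv {X : Type*} {S : Finset X} {α : Perm X} (h : IsFull S α) : IsFull S α⁻¹ :=
  ⟨fun z hz => by rw [Perm.inv_eq_iff_eq, h.1 z hz], fun a ha b hb => (h.2 a ha b hb).inv⟩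

section

variable {X : Type*} [DecidableEq X]

/-- Splicing: inserting a fixed point `f` of `γ` in front of the image of `x` turns a full cycle on
`S \ {f}` into a full cycle on `S`, and only then is the result a full cycle. -/
lemma isFull_splice {S : Finset X} {γ : Perm X} {f x : X} (hf : f ∈ S) (hx : x ∈ S)
    (hxf : x ≠ f) (hγ : γ f = f) :
    IsFull S (γ * swap f x) ↔ IsFull (S.erase f) γ := by
  have hne : ∀ z, z ≠ f → γ z ≠ f := fun z hz h => hz (γ.injective (h.trans hγ.symm))
  have e1 : (γ * swap f x) f = γ x := by simp
  have e2 : (γ * swap f x) x = f := by simp [hγ]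
  have e3 : ∀ z, z ≠ f → z ≠ x → (γ * swap f x) z = γ z := by
    intro z h1 h2
    rw [Perm.mul_apply, swap_apply_of_ne_of_ne h1 h2]
  constructor
  · rintro ⟨h1, h2⟩
    refine ⟨fun z hz => ?_, fun a ha b hb => ?_⟩
    · by_cases hzf : z = f
      · rw [hzf, hγ]
      · have hzS : z ∉ S := fun h => hz (mem_erase.2 ⟨hzf, h⟩)
        rw [← e3 z hzf (fun h => hzS (h ▸ hx)), h1 z hzS]
    · rw [mem_erase] at ha hb
      -- `r` collapses the inserted point `f` onto its predecessor `x`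
      have := sameCycle_map (γ := γ) (δ := γ * swap f x) (fun z => if z = f then x else z) (by
        intro z
        by_cases hzf : z = f
        · subst hzf
          simpa [e1, hne x hxf] using (SameCycle.refl γ x)
        · by_cases hzx : z = x
          · subst hzx
            rw [e2]
            simp [hzf, SameCycle.refl]
          · rw [e3 z hzf hzx]
            simpa [hzf, hne z hzf] using (SameCycle.refl γ z)) (h2 a ha.2 b hb.2)
      simpa [ha.1, hb.1] using this
  · rintro ⟨h1, h2⟩
    have key : ∀ a b, SameCycle γ a b → SameCycle (γ * swap f x) a b := fun a b =>
      sameCycle_map (γ := γ * swap f x) (δ := γ) id (by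
        intro z
        by_cases hzf : z = f
        · subst hzf
          simp [hγ, SameCycle.refl]
        · by_cases hzx : z = x
          · subst hzx
            refine ⟨2, ?_⟩
            rw [zpow_ofNat, pow_two, Perm.mul_apply, id, e2, e1, id]
          · exact ⟨1, by rw [zpow_one, id, e3 z hzf hzx, id]⟩)
    have hfx : SameCycle (γ * swap f x) x f := ⟨1, by rw [zpow_one, e2]⟩
    have hxa : ∀ a ∈ S, SameCycle (γ * swap f x) x a := by
      intro a ha
      by_cases haf : a = f
      · rw [haf]; exact hfx
      · exact key _ _ (h2 _ (mem_erase.2 ⟨hxf, hx⟩) _ (mem_erase.2 ⟨haf, ha⟩))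
    refine ⟨fun z hz => ?_, fun a ha b hb => (hxa a ha).symm.trans (hxa b hb)⟩
    rw [e3 z (fun h => hz (h ▸ hf)) (fun h => hz (h ▸ hx))]
    exact h1 z (fun h => hz (mem_of_mem_erase h))

lemma isFull_iff [Fintype X] {S : Finset X} {α : Perm X} (hS : 2 ≤ S.card) :
    IsFull S α ↔ α.IsCycle ∧ α.support = S := by
  constructor
  · intro h
    have hs : α.support = S := by
      ext z
      rw [mem_support]
      exact ⟨fun hz => by_contra fun hn => hz (h.1 z hn), fun hz => h.ne hS hz⟩
    obtain ⟨z, hz⟩ := card_pos.1 (by omega : 0 < S.card)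
    refine ⟨⟨z, h.ne hS hz, fun y hy => h.2 z hz y ?_⟩, hs⟩
    rwa [← hs, mem_support]
  · rintro ⟨hc, rfl⟩
    refine ⟨fun z hz => by simpa using hz, fun a ha b hb => ?_⟩
    exact hc.sameCycle (mem_support.1 ha) (mem_support.1 hb)

noncomputable instance {Y : Type*} (S : Finset Y) : DecidablePred (IsFull S) :=
  Classical.decPred _

/-- The finite set of full cycles on `S`. -/
noncomputable def fullCycles [Fintype X] (S : Finset X) : Finset (Perm X) :=
  univ.filter (IsFull S)

lemma mem_fullCycles [Fintype X] {S : Finset X} {α : Perm X} :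
    α ∈ fullCycles S ↔ IsFull S α := by
  simp [fullCycles]

/-! ### Factorizations of odd permutations with a marked point -/

/-- The number of pairs `(α, b)` with `α` a full cycle on `S`, `b ∈ S` and `α σ` a full cycle on
`S \ {b}`. -/
noncomputable def cnt [Fintype X] (S : Finset X) (σ : Perm X) : ℤ :=
  ∑ α ∈ fullCycles S, ∑ b ∈ S, if α * σ ∈ fullCycles (S.erase b) then 1 else 0

/-- Every full cycle on `S` arises exactly once by splicing `f` into a full cycle on `S \ {f}`. -/
lemma sum_fullCycles [Fintype X] {S : Finset X} {f : X} (hf : f ∈ S) (hS : 2 ≤ S.card)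
    (F : Perm X → ℤ) :
    ∑ α ∈ fullCycles S, F α =
      ∑ x ∈ S.erase f, ∑ α ∈ fullCycles (S.erase f), F (α * swap f x) := by
  rw [← Finset.sum_product']
  symm
  refine Finset.sum_bij' (fun p _ => p.2 * swap f p.1)
    (fun α _ => (α⁻¹ f, α * swap f (α⁻¹ f))) ?_ ?_ ?_ ?_ ?_
  · rintro ⟨x, α⟩ h
    simp only [mem_product, mem_erase, mem_fullCycles] at h ⊢
    exact (isFull_splice hf h.1.2 h.1.1 (h.2.1 f (by simp))).2 h.2
  · intro α h
    rw [mem_fullCycles] at h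
    have hxf : α⁻¹ f ≠ f := h.inv.ne hS hf
    have hx : α⁻¹ f ∈ S := by
      by_contra hn
      have := h.1 _ hn
      rw [perm_apply_inv] at this
      exact hxf this.symm
    simp only [mem_product, mem_erase, mem_fullCycles]
    refine ⟨⟨hxf, hx⟩, (isFull_splice hf hx hxf (by simp)).1 ?_⟩
    simpa [mul_assoc] using h
  · rintro ⟨x, α⟩ h
    simp only [mem_product, mem_erase, mem_fullCycles] at h
    have h1 : (α * swap f x)⁻¹ f = x := by
      rw [Perm.inv_eq_iff_eq, Perm.mul_apply, swap_apply_right, h.2.1 f (by simp)]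
    simp only [h1, mul_assoc, swap_mul_self, mul_one]
  · intro α h
    simp [mul_assoc]
  · intro p h
    rfl

/-- If `α σ` is full on `S`, then there is exactly one `x ≠ g` for which `α (g x) σ` is full on
`S \ {σ⁻¹ x}`, namely `x = σ (α g)`; otherwise there is none. This is `isFull_splice` applied to the
fixed point `σ⁻¹ x = α g` of `α (g x) σ`. -/
lemma sum_unsplice [Fintype X] {S : Finset X} (hS : 2 ≤ S.card) {σ α : Perm X}
    (hσ : ∀ z, z ∉ S → σ z = z) {g : X} (hg : g ∈ S) (hα : IsFull S α) :
    (∑ x ∈ S.erase g, if α * (swap g x * σ) ∈ fullCycles (S.erase (σ⁻¹ x)) then (1 : ℤ) else 0) =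
      if α * σ ∈ fullCycles S then 1 else 0 := by
  have hστ : ∀ z, z ∈ S → σ z ∈ S := by
    intro z hz
    by_contra hn
    exact hn ((σ.injective (hσ _ hn)).symm ▸ hz)
  have hσi : ∀ z, z ∈ S → σ⁻¹ z ∈ S := by
    intro z hz
    by_contra hn
    have := hσ _ hn
    rw [perm_apply_inv] at this
    exact hn (this ▸ hz)
  have hατ : ∀ z, z ∈ S → α z ∈ S := by
    intro z hz
    by_contra hn
    exact hn ((α.injective (hα.1 _ hn)).symm ▸ hz)
  simp only [mem_fullCycles]
  have hx : ∀ x, IsFull (S.erase (σ⁻¹ x)) (α * (swap g x * σ)) → x = σ (α g) := by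
    intro x h
    have := h.1 (σ⁻¹ x) (by simp)
    simp only [Perm.mul_apply, perm_apply_inv, swap_apply_right] at this
    rw [this, perm_apply_inv]
  by_cases hx0 : σ (α g) = g
  · rw [Finset.sum_eq_zero, if_neg]
    · intro h
      refine h.ne hS (hατ _ hg) ?_
      rw [Perm.mul_apply, hx0]
    · intro x h
      rw [if_neg]
      intro h'
      exact (mem_erase.1 h).1 ((hx x h').trans hx0)
  · rw [Finset.sum_eq_single_of_mem (σ (α g)) (mem_erase.2 ⟨hx0, hστ _ (hατ _ hg)⟩)
      (fun x _ hne => if_neg fun h => hne (hx x h))]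
    rw [perm_inv_apply]
    have hne : σ⁻¹ g ≠ α g := fun h => hx0 (by rw [← h, perm_apply_inv])
    have hs : α * σ = α * (swap g (σ (α g)) * σ) * swap (α g) (σ⁻¹ g) := by
      have : σ * swap (α g) (σ⁻¹ g) = swap (σ (α g)) g * σ := by
        rw [Equiv.mul_swap_eq_swap_mul, perm_apply_inv]
      rw [mul_assoc, mul_assoc, this, swap_comm, swap_mul_self_mul]
    simp only [hs, isFull_splice (hατ _ hg) (hσi _ hg) hne
      (show (α * (swap g (σ (α g)) * σ)) (α g) = α g by simp)]

/-- An odd permutation of a set of `k + 2` points is the product of a full cycle and a full cycle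
on the complement of a marked point in `2 k!` ways, whatever its cycle type. -/
lemma cnt_odd [Fintype X] (k : ℕ) : ∀ (S : Finset X) (σ : Perm X), S.card = k + 2 →
    (∀ z, z ∉ S → σ z = z) → sign σ = -1 → cnt S σ = 2 * k.factorial := by
  induction k with
  | zero =>
    intro S σ hS hσ hs
    have hn : σ ≠ 1 := by
      intro h
      rw [h] at hs
      simp at hs
    -- the transposition `σ` is the only full cycle on two points
    have hF : ∀ α : Perm X, IsFull S α ↔ α = σ := by
      obtain ⟨a, b, hab, rfl⟩ := card_eq_two.1 hS
      have hsw : ∀ α : Perm X, (∀ z, z ∉ ({a, b} : Finset X) → α z = z) → α ≠ 1 →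
          α = swap a b := by
        intro α h1 h2
        have hsub : α.support ⊆ {a, b} := fun z hz => by_contra fun h => mem_support.1 hz (h1 z h)
        have h3 : α.support = {a, b} :=
          eq_of_subset_of_card_le hsub (hS.le.trans (two_le_card_support_of_ne_one h2))
        have h4 : α.IsSwap := by rw [← card_support_eq_two, h3, hS]
        obtain ⟨c, d, hcd, rfl⟩ := h4
        rw [support_swap hcd] at h3
        have hc : c ∈ ({a, b} : Finset X) := h3 ▸ by simp
        have hd : d ∈ ({a, b} : Finset X) := h3 ▸ by simp
        simp only [mem_insert, mem_singleton] at hc hd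
        rcases hc with rfl | rfl <;> rcases hd with rfl | rfl <;>
          first | contradiction | rfl | exact swap_comm _ _
      rw [hsw σ hσ hn]
      intro α
      constructor
      · intro h
        exact hsw α h.1 fun h1 => h.ne hS.ge (mem_insert_self a _) (by rw [h1]; rfl)
      · rintro rfl
        exact (isFull_iff hS.ge).2 ⟨isCycle_swap hab, support_swap hab⟩
    have hF' : fullCycles S = {σ} := by
      ext α
      rw [mem_fullCycles, hF, mem_singleton]
    have hsq : σ * σ = 1 := by
      have hi : σ⁻¹ = σ := (hF σ⁻¹).1 ((hF σ).2 rfl).inv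
      rw [← inv_mul_cancel σ, hi]
    rw [cnt, hF', sum_singleton, hsq, Finset.sum_congr rfl (g := fun _ => (1 : ℤ))]
    · simp [hS]
    · intro b hb
      rw [if_pos]
      rw [mem_fullCycles]
      refine ⟨fun _ _ => rfl, fun x hx y hy => ?_⟩
      have : x = y := card_le_one.1 (by rw [card_erase_of_mem hb, hS]) x hx y hy
      rw [this]
  | succ k ih =>
    intro S σ hS hσ hs
    obtain ⟨f, hff⟩ : ∃ f, σ f ≠ f := by
      by_contra! h
      rw [show σ = 1 from Perm.ext h] at hs
      simp at hs
    have hf : f ∈ S := by_contra fun h => hff (hσ f h)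
    obtain ⟨g, hg⟩ : ∃ g, g = σ f := ⟨_, rfl⟩
    have hgf : g ≠ f := hg ▸ hff
    have hgS : g ∈ S := by
      by_contra hn
      exact hgf (σ.injective ((hσ g hn).trans hg))
    obtain ⟨τ, hτ⟩ : ∃ τ, τ = swap f g * σ := ⟨_, rfl⟩
    have hστ : σ = swap f g * τ := by rw [hτ, swap_mul_self_mul]
    have hτf : τ f = f := by rw [hτ, Perm.mul_apply, ← hg, swap_apply_right]
    have hτS : ∀ z, z ∉ S.erase f → τ z = z := by
      intro z hz
      by_cases hzf : z = f
      · rw [hzf, hτf]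
      · have hzS : z ∉ S := fun h => hz (mem_erase.2 ⟨hzf, h⟩)
        rw [hτ, Perm.mul_apply, hσ z hzS,
          swap_apply_of_ne_of_ne hzf (fun h => hzS (h ▸ hgS))]
    have hτi : ∀ z ∈ S.erase f, τ⁻¹ z ∈ S.erase f := by
      intro z hz
      by_contra hn
      have := hτS _ hn
      rw [perm_apply_inv] at this
      exact hn (this ▸ hz)
    have hsτ : sign τ = 1 := by
      rw [hτ, Perm.sign_mul, hs, sign_swap hgf.symm]; rfl
    have hgS' : g ∈ S.erase f := mem_erase.2 ⟨hgf, hgS⟩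
    have hS' : (S.erase f).card = k + 2 := by rw [card_erase_of_mem hf, hS]; rfl
    -- contribution of `x = g`
    have hxg : ∀ α ∈ fullCycles (S.erase f),
        (∑ b ∈ S, if α * swap f g * σ ∈ fullCycles (S.erase b) then (1 : ℤ) else 0) =
          if α * τ ∈ fullCycles (S.erase f) then 1 else 0 := by
      intro α hα
      rw [mem_fullCycles] at hα
      rw [mul_assoc, ← hτ]
      apply Finset.sum_eq_single_of_mem f hf
      intro b hb hbf
      rw [if_neg]
      rw [mem_fullCycles]
      intro h
      refine h.ne (z := f) (by rw [card_erase_of_mem hb]; omega)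
        (mem_erase.2 ⟨hbf.symm, hf⟩) ?_
      rw [Perm.mul_apply, hτf, hα.1 f (by simp)]
    -- contribution of `x ≠ g`
    have hxne : ∀ x ∈ (S.erase f).erase g, ∀ α ∈ fullCycles (S.erase f),
        (∑ b ∈ S, if α * swap f x * σ ∈ fullCycles (S.erase b) then (1 : ℤ) else 0) =
          (∑ b ∈ S.erase f, if α * (swap g x * τ) ∈ fullCycles ((S.erase f).erase b)
            then (1 : ℤ) else 0) -
          if α * (swap g x * τ) ∈ fullCycles ((S.erase f).erase (τ⁻¹ x)) then 1 else 0 := by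
      intro x hx α hα
      rw [mem_fullCycles] at hα
      obtain ⟨hxg, hx'⟩ := mem_erase.1 hx
      obtain ⟨hxf, hxS⟩ := mem_erase.1 hx'
      have hαf : α f = f := hα.1 f (by simp)
      have hyS' := hτi x hx'
      obtain ⟨hyf, hyS⟩ := mem_erase.1 hyS'
      have hγf : (α * (swap g x * τ)) f = f := by
        simp only [Perm.mul_apply]
        rw [hτf, swap_apply_of_ne_of_ne hgf.symm hxf.symm, hαf]
      have hβ : α * swap f x * σ = α * (swap g x * τ) * swap f (τ⁻¹ x) := by
        have h1 : τ * swap f (τ⁻¹ x) = swap f x * τ := by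
          rw [Equiv.mul_swap_eq_swap_mul, perm_apply_inv, hτf]
        have h2 : swap f x * swap f g = swap g x * swap f x := by
          rw [Equiv.mul_swap_eq_swap_mul, swap_apply_left,
            swap_apply_of_ne_of_ne hgf hxg.symm, swap_comm x g]
        rw [hστ, mul_assoc, mul_assoc, mul_assoc, h1, ← mul_assoc (swap f x), h2, mul_assoc]
      rw [hβ]
      generalize hγ : α * (swap g x * τ) = γ at *
      have hb0 : ∀ b, (γ * swap f b) b = f := by intro b; simp [hγf]
      rw [← Finset.add_sum_erase _ _ hf, ← Finset.add_sum_erase _ _ hyS',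
        ← Finset.add_sum_erase _ (fun b => if γ ∈ fullCycles ((S.erase f).erase b)
            then (1 : ℤ) else 0) hyS']
      rw [if_neg, if_neg, zero_add, zero_add, add_sub_cancel_left]
      · apply Finset.sum_congr rfl
        intro b hb
        obtain ⟨hby, hb'⟩ := mem_erase.1 hb
        obtain ⟨hbf, hbS⟩ := mem_erase.1 hb'
        simp only [mem_fullCycles, isFull_splice (mem_erase.2 ⟨hbf.symm, hf⟩)
          (mem_erase.2 ⟨hby.symm, hyS⟩) hyf hγf, erase_right_comm (a := b)]
      · rw [mem_fullCycles]
        intro h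
        have := h.1 (τ⁻¹ x) (by simp)
        rw [hb0] at this
        exact hyf this.symm
      · rw [mem_fullCycles]
        intro h
        have h0 := h.1 f (by simp)
        exact hyf ((γ * swap f (τ⁻¹ x)).injective ((hb0 _).trans h0.symm))
    rw [cnt, sum_fullCycles hf (by omega), ← Finset.add_sum_erase _ _ hgS',
      Finset.sum_congr rfl hxg,
      Finset.sum_congr rfl fun x hx => Finset.sum_congr rfl (hxne x hx)]
    simp only [Finset.sum_sub_distrib]
    rw [Finset.sum_comm (s := (S.erase f).erase g)
      (f := fun x α => if α * (swap g x * τ) ∈ fullCycles ((S.erase f).erase (τ⁻¹ x))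
        then (1 : ℤ) else 0)]
    rw [Finset.sum_congr rfl fun α hα => sum_unsplice (by omega) hτS hgS' (mem_fullCycles.1 hα)]
    rw [add_sub_cancel]
    have hP : ∀ x ∈ (S.erase f).erase g, (∑ α ∈ fullCycles (S.erase f), ∑ b ∈ S.erase f,
        if α * (swap g x * τ) ∈ fullCycles ((S.erase f).erase b) then (1 : ℤ) else 0) =
          2 * k.factorial := by
      intro x hx
      obtain ⟨hxg, hx'⟩ := mem_erase.1 hx
      refine ih (S.erase f) (swap g x * τ) hS' ?_ ?_
      · intro z hz
        rw [Perm.mul_apply, hτS z hz, swap_apply_of_ne_of_ne] <;> rintro rfl <;> contradiction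
      · rw [Perm.sign_mul, hsτ, sign_swap hxg.symm, mul_one]
    rw [Finset.sum_congr rfl hP, Finset.sum_const, card_erase_of_mem hgS', hS',
      Nat.factorial_succ, nsmul_eq_mul]
    push_cast
    ring

/-- Both parities at once: for even `σ` there are no such pairs, because full cycles on `m` and on
`m - 1` points have opposite signs. -/
lemma cnt_eq [Fintype X] {k : ℕ} (hk : 1 ≤ k) {S : Finset X} {σ : Perm X} (hS : S.card = k + 2)
    (hσ : ∀ z, z ∉ S → σ z = z) : cnt S σ = (1 - (sign σ : ℤ)) * k.factorial := by
  rcases Int.units_eq_one_or (sign σ) with h | h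
  · rw [h, cnt, Finset.sum_eq_zero]
    · simp
    intro α hα
    refine Finset.sum_eq_zero fun b hb => if_neg fun hβ => ?_
    have hS' : (S.erase b).card = k + 1 := by rw [card_erase_of_mem hb, hS]; rfl
    rw [mem_fullCycles, isFull_iff (by omega)] at hα hβ
    have h1 := hα.1.sign
    have h2 := hβ.1.sign
    rw [hα.2, hS] at h1
    rw [hβ.2, hS', Perm.sign_mul, h, mul_one, h1, pow_succ] at h2
    rcases neg_one_pow_eq_or ℤˣ (k + 1) with h3 | h3 <;> rw [h3] at h2 <;> revert h2 <;> decide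
  · rw [cnt_odd k S σ hS hσ h, h]
    push_cast
    ring

/-! ### Marking the two fixed points -/

/-- The factorizations in which the short cycle is required to fix the given point `f`. -/
lemma sum_fixing [Fintype X] {k : ℕ} (hk : 1 ≤ k) (hX : Fintype.card X = k + 3) (σ : Perm X)
    (f : X) :
    (∑ α ∈ fullCycles (univ : Finset X), ∑ b ∈ univ.erase f,
      if α * σ ∈ fullCycles ((univ.erase f).erase b) then (1 : ℤ) else 0) =
      if f ∈ σ.support then (1 + (sign σ : ℤ)) * k.factorial else 0 := by
  have hU : (univ : Finset X).card = k + 3 := by rw [card_univ, hX]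
  have hfix : ∀ b, ∀ β : Perm X, β f ≠ f → β ∉ fullCycles ((univ.erase f).erase b) := by
    intro b β h h'
    rw [mem_fullCycles] at h'
    exact h (h'.1 f (by simp))
  split_ifs with h
  · rw [mem_support] at h
    rw [sum_fullCycles (mem_univ f) (by omega),
      Finset.sum_eq_single_of_mem (σ f) (mem_erase.2 ⟨h, mem_univ _⟩)]
    · have := cnt_eq hk (S := univ.erase f) (σ := swap f (σ f) * σ)
        (by rw [card_erase_of_mem (mem_univ f), hU]; rfl) (by simp)
      rw [cnt, Perm.sign_mul, sign_swap h.symm] at this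
      simp only [mul_assoc] at this ⊢
      rw [this]
      push_cast
      ring
    · intro x hx hne
      refine Finset.sum_eq_zero fun α hα => Finset.sum_eq_zero fun b hb => if_neg (hfix _ _ ?_)
      rw [mem_fullCycles] at hα
      have hαf : α f = f := hα.1 f (by simp)
      rw [Perm.mul_apply, Perm.mul_apply, swap_apply_of_ne_of_ne h hne.symm]
      exact fun h' => h (α.injective (h'.trans hαf.symm))
  · rw [mem_support, not_not] at h
    refine Finset.sum_eq_zero fun α hα => Finset.sum_eq_zero fun b hb => if_neg (hfix _ _ ?_)
    rw [mem_fullCycles] at hα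
    rw [Perm.mul_apply, h]
    exact hα.ne (by omega) (mem_univ f)

/-- A cycle missing exactly two points is full on the complement of `{f, b}` for two ordered pairs
`(f, b)`. -/
lemma sum_pairs [Fintype X] {k : ℕ} (hk : 1 ≤ k) (hX : Fintype.card X = k + 3) (β : Perm X)
    [Decidable (β.IsCycle ∧ β.support.card = k + 1)] :
    (∑ f : X, ∑ b ∈ univ.erase f,
      if β ∈ fullCycles ((univ.erase f).erase b) then (1 : ℤ) else 0) =
      if β.IsCycle ∧ β.support.card = k + 1 then 2 else 0 := by
  have hU : (univ : Finset X).card = k + 3 := by rw [card_univ, hX]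
  have hc : ∀ f : X, ∀ b ∈ univ.erase f, ((univ.erase f).erase b).card = k + 1 := by
    intro f b hb
    rw [card_erase_of_mem hb, card_erase_of_mem (mem_univ f), hU]
    rfl
  have hm : ∀ f : X, ∀ b ∈ univ.erase f, (β ∈ fullCycles ((univ.erase f).erase b) ↔
      β.IsCycle ∧ β.support = (univ.erase f).erase b) := by
    intro f b hb
    rw [mem_fullCycles, isFull_iff (by rw [hc f b hb]; omega)]
  split_ifs with h
  · have h2 : (β.supportᶜ).card = 2 := by
      rw [card_compl, h.2, hX]
      omega
    have h3 : ((β.supportᶜ).offDiag.card : ℤ) = 2 := by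
      rw [offDiag_card, h2]
      rfl
    rw [← h3, Finset.sum_sigma', Finset.sum_boole, Nat.cast_inj]
    refine Finset.card_bij (fun p _ => (p.1, p.2)) ?_ ?_ ?_
    · rintro ⟨f, b⟩ hp
      obtain ⟨hb, hβ⟩ := mem_filter.1 hp
      have hb := (mem_sigma.1 hb).2
      rw [hm f b hb] at hβ
      rw [mem_offDiag, hβ.2]
      simpa [eq_comm] using hb
    · rintro ⟨f, b⟩ _ ⟨f', b'⟩ _ h
      simpa using h
    · rintro ⟨f, b⟩ hp
      simp only [mem_offDiag, mem_compl] at hp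
      have hb : b ∈ univ.erase f := mem_erase.2 ⟨Ne.symm hp.2.2, mem_univ _⟩
      refine ⟨⟨f, b⟩, mem_filter.2 ⟨mem_sigma.2 ⟨mem_univ _, hb⟩, (hm f b hb).2 ⟨h.1, ?_⟩⟩, rfl⟩
      refine eq_of_subset_of_card_le (fun z hz => ?_) (by rw [hc f b hb, h.2])
      simp only [mem_erase, mem_univ, and_true]
      exact ⟨fun h => hp.2.1 (h ▸ hz), fun h => hp.1 (h ▸ hz)⟩
  · refine Finset.sum_eq_zero fun f _ => Finset.sum_eq_zero fun b hb => if_neg fun hβ => h ?_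
    rw [hm f b hb] at hβ
    exact ⟨hβ.1, by rw [hβ.2, hc f b hb]⟩

end

/-! ### Cycle types in `Fin n` -/

lemma fullCycleType_eq_iff {n k : ℕ} (hk : 2 ≤ k) (β : Perm (Fin n)) :
    fullCycleType β = k ::ₘ Multiset.replicate (n - k) 1 ↔
      β.IsCycle ∧ β.support.card = k := by
  unfold fullCycleType
  constructor
  · intro h
    have h1 : Multiset.filter (1 < ·) β.cycleType = β.cycleType :=
      Multiset.filter_eq_self.2 fun a ha => one_lt_of_mem_cycleType ha
    have h2 : ∀ m, Multiset.filter (1 < ·) (Multiset.replicate m 1) = 0 := by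
      intro m
      rw [Multiset.filter_eq_nil]
      intro a ha
      rw [Multiset.eq_of_mem_replicate ha]
      omega
    have h3 := congrArg (Multiset.filter (1 < ·)) h
    rw [Multiset.filter_add, h1, h2, add_zero, Multiset.filter_cons_of_pos _ (by omega), h2] at h3
    refine ⟨card_cycleType_eq_one.1 (by rw [h3]; rfl), ?_⟩
    rw [← sum_cycleType, h3]
    simp
  · rintro ⟨h1, h2⟩
    rw [h1.cycleType, h2]
    simp

lemma count_one_fullCycleType {n : ℕ} (σ : Perm (Fin n)) :
    Multiset.count 1 (fullCycleType σ) = n - σ.support.card := by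
  unfold fullCycleType
  rw [Multiset.count_add, Multiset.count_replicate_self, sum_cycleType,
    Multiset.count_eq_zero_of_notMem, zero_add]
  intro h
  exact absurd (one_lt_of_mem_cycleType h) (by omega)

/-- For `n ≥ 4` and `σ ∈ S_n` with `m₁` fixed points, the number of pairs `(α, β)` with
`α` an `n`-cycle, `β` of cycle type `(n-2,1,1)` and `α·β = σ` equals
`(1 + ε(σ)) (n-3)! (n - m₁) / 2`. -/
theorem stmt3 (n : ℕ) (hn : 4 ≤ n) (σ : Equiv.Perm (Fin n))
    (m1 : ℕ) (hm1 : m1 = Multiset.count 1 (fullCycleType σ)) :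
    (Nat.card {p : Equiv.Perm (Fin n) × Equiv.Perm (Fin n) //
        fullCycleType p.1 = {n} ∧
        fullCycleType p.2 = (n - 2) ::ₘ Multiset.replicate 2 1 ∧
        p.1 * p.2 = σ} : ℚ)
      = (1 + ((Equiv.Perm.sign σ : ℤ) : ℚ)) * (n - 3).factorial * ((n : ℚ) - m1) / 2 := by
  classical
  obtain ⟨k, rfl⟩ : ∃ k, n = k + 3 := ⟨n - 3, by omega⟩
  have hk : 1 ≤ k := by omega
  have hX : Fintype.card (Fin (k + 3)) = k + 3 := Fintype.card_fin _
  have hα : ∀ α : Perm (Fin (k + 3)), fullCycleType α = {k + 3} ↔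
      α ∈ fullCycles (univ : Finset (Fin (k + 3))) := by
    intro α
    have h := fullCycleType_eq_iff (show 2 ≤ k + 3 by omega) α
    rw [Nat.sub_self] at h
    rw [mem_fullCycles, isFull_iff (by rw [card_univ, hX]; omega)]
    refine h.trans (and_congr_right fun _ => ?_)
    rw [← card_eq_iff_eq_univ, hX]
  have hβ : ∀ β : Perm (Fin (k + 3)),
      fullCycleType β = (k + 3 - 2) ::ₘ Multiset.replicate 2 1 ↔
        β.IsCycle ∧ β.support.card = k + 1 := by
    intro β
    have h := fullCycleType_eq_iff (show 2 ≤ k + 1 by omega) β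
    rwa [show k + 3 - (k + 1) = 2 by omega] at h
  -- the pair `(α, β)` is determined by `α⁻¹`, since `β = α⁻¹ σ`
  have hcard : Nat.card {p : Perm (Fin (k + 3)) × Perm (Fin (k + 3)) //
        fullCycleType p.1 = {k + 3} ∧
        fullCycleType p.2 = (k + 3 - 2) ::ₘ Multiset.replicate 2 1 ∧ p.1 * p.2 = σ} =
      ((fullCycles univ).filter fun α : Perm (Fin (k + 3)) =>
        (α * σ).IsCycle ∧ (α * σ).support.card = k + 1).card := by
    rw [Nat.card_eq_fintype_card, Fintype.card_subtype]
    refine Finset.card_bij' (fun p _ => p.1⁻¹) (fun α _ => (α⁻¹, α * σ)) ?_ ?_ ?_ ?_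
    · rintro ⟨α, β⟩ h
      simp only [mem_filter, mem_univ, true_and, hα, hβ, mem_fullCycles] at h ⊢
      obtain ⟨h1, h2, rfl⟩ := h
      rw [inv_mul_cancel_left]
      exact ⟨h1.inv, h2⟩
    · intro α h
      simp only [mem_filter, mem_univ, true_and, hα, hβ, mem_fullCycles] at h ⊢
      exact ⟨h.1.inv, h.2, inv_mul_cancel_left _ _⟩
    · rintro ⟨α, β⟩ h
      obtain ⟨-, -, -, rfl⟩ := mem_filter.1 h
      simp
    · intro α h
      simp
  have hsum : (2 : ℤ) * ((fullCycles univ).filter fun α : Perm (Fin (k + 3)) =>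
        (α * σ).IsCycle ∧ (α * σ).support.card = k + 1).card =
      σ.support.card * ((1 + (sign σ : ℤ)) * k.factorial) := by
    rw [Finset.card_filter]
    push_cast
    rw [Finset.mul_sum]
    simp only [mul_ite, mul_one, mul_zero]
    rw [← Finset.sum_congr rfl fun α _ => sum_pairs hk hX (α * σ), Finset.sum_comm,
      Finset.sum_congr rfl fun f _ => sum_fixing hk hX σ f, ← Finset.sum_filter, Finset.sum_const,
      nsmul_eq_mul, Finset.filter_mem_eq_inter, univ_inter]
  have hle : σ.support.card ≤ k + 3 := (card_le_univ _).trans hX.le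
  have hm : ((k + 3 : ℕ) : ℚ) - m1 = σ.support.card := by
    rw [hm1, count_one_fullCycleType, Nat.cast_sub hle]
    ring
  have hq := congrArg (Int.cast : ℤ → ℚ) hsum
  push_cast at hq
  rw [hcard, hm, Nat.add_sub_cancel]
  linarith
end

section
/- Let i ≥ 2, j ≥ 0, and m ≥ 1. Then a(m, (i+j), (i, 1^j)) = [ (i+j)_j · (i+j−1)_j / j! ] · a(m, (i), (i)), where the left-hand side counts triples on an (i+j)-element set and the right-hand side counts triples on an i-element set, and (x)_r := x(x−1)⋯(x−r+1) is the falling factorial. -/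
/-- `tripleCount N m lam mu` is the number of triples `(σ, α, β)` of permutations of an
`N`-element set with `σ·α·β = 1`, `α` of cycle type `lam`, `β` of cycle type `mu`, and
`σ` having exactly `m` orbits. -/
noncomputable def tripleCount (N m : ℕ) (lam mu : Multiset ℕ) : ℕ :=
  Nat.card {t : Equiv.Perm (Fin N) × Equiv.Perm (Fin N) × Equiv.Perm (Fin N) //
    t.1 * t.2.1 * t.2.2 = 1 ∧ fullCycleType t.2.1 = lam ∧ fullCycleType t.2.2 = mu ∧
    Multiset.card (fullCycleType t.1) = m}

open Equiv Equiv.Perm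

/-- The number of orbits of a permutation, fixed points included. -/
noncomputable def orbitCount {X : Type*} (σ : Perm X) : ℕ :=
  Nat.card (Quotient (SameCycle.setoid σ))

/-- For a fixed permutation `β`, the number of full cycles `α` such that `α * β` has exactly
`m` orbits. -/
noncomputable def fullCycleCount {X : Type*} (β : Perm X) (m : ℕ) : ℕ :=
  Nat.card {α : Perm X // orbitCount α = 1 ∧ orbitCount (α * β) = m}

/-! ### Orbit counts -/

theorem orbitCount_eq_of_map {X Y : Type*} {σ : Perm X} {τ : Perm Y} (f : X → Y)
    (hf : ∀ x y, SameCycle τ (f x) (f y) ↔ SameCycle σ x y)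
    (hs : ∀ y, ∃ x, SameCycle τ (f x) y) : orbitCount σ = orbitCount τ := by
  refine Nat.card_eq_of_bijective
    (Quotient.map (sa := SameCycle.setoid σ) (sb := SameCycle.setoid τ) f
      fun x y h => (hf x y).2 h) ⟨?_, ?_⟩
  · intro a b
    induction a using Quotient.inductionOn
    induction b using Quotient.inductionOn
    intro h
    exact Quotient.sound ((hf _ _).1 (Quotient.exact h))
  · intro b
    induction b using Quotient.inductionOn with
    | h y =>
      obtain ⟨x, hx⟩ := hs y
      exact ⟨Quotient.mk _ x, Quotient.sound hx⟩

/-- A function invariant under `σ` is constant on the orbits of `σ`. -/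
theorem eq_of_sameCycle {X Z : Type*} {σ : Perm X} (g : X → Z) (hg : ∀ x, g (σ x) = g x)
    {x y : X} (h : SameCycle σ x y) : g x = g y := by
  obtain ⟨k, rfl⟩ := h
  induction k with
  | zero => simp
  | succ n ih => rw [add_comm, zpow_add, zpow_one, Perm.mul_apply, hg, ih]
  | pred n ih =>
    rw [ih, ← hg ((σ ^ (-(n : ℤ) - 1)) x), ← Perm.mul_apply, ← zpow_one_add]
    congr 3
    ring

theorem orbitCount_inv {X : Type*} (σ : Perm X) : orbitCount σ⁻¹ = orbitCount σ :=
  orbitCount_eq_of_map id (fun _ _ => sameCycle_inv.symm) fun y => ⟨y, SameCycle.refl _ _⟩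

theorem orbitCount_permCongr {X Y : Type*} (e : X ≃ Y) (σ : Perm X) :
    orbitCount (e.permCongr σ) = orbitCount σ := by
  have key : ∀ (k : ℤ) (x : X), ((e.permCongr σ) ^ k) (e x) = e ((σ ^ k) x) := by
    intro k x
    have : (e.permCongr σ) ^ k = e.permCongr (σ ^ k) :=
      (map_zpow e.permCongrHom σ k).symm
    rw [this]
    simp
  refine (orbitCount_eq_of_map e (fun x y => ?_) fun y => ⟨e.symm y, ?_⟩).symm
  · simp only [SameCycle, key, e.injective.eq_iff]
  · simpa using SameCycle.refl _ _

/-- Inserting a new point `none` into the orbit of `a`, just before `a`, does not change the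
number of orbits. -/
theorem orbitCount_swap_mul_optionCongr {X : Type*} [DecidableEq X] (a : X) (τ : Perm X) :
    orbitCount (swap none (some a) * τ.optionCongr) = orbitCount τ := by
  set σ : Perm (Option X) := swap none (some a) * τ.optionCongr with hσ
  have hnone : σ none = some a := by simp [hσ]
  have hsome : ∀ x, τ x ≠ a → σ (some x) = some (τ x) := by
    intro x hx
    rw [hσ, Perm.mul_apply, optionCongr_apply, Option.map_some]
    exact swap_apply_of_ne_of_ne (by simp) (by simpa using hx)
  have hsome' : ∀ x, τ x = a → σ (some x) = none := by
    intro x hx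
    rw [hσ, Perm.mul_apply, optionCongr_apply, Option.map_some, hx, swap_apply_right]
  have hstep : ∀ x, SameCycle σ (some (τ x)) (some x) := by
    intro x
    by_cases hx : τ x = a
    · rw [hx, ← hnone, ← hsome' x hx]
      simpa using SameCycle.refl _ _
    · rw [← hsome x hx]
      simpa using SameCycle.refl _ _
  refine (orbitCount_eq_of_map some (fun x y => ⟨fun h => ?_, fun h => ?_⟩) fun y => ?_).symm
  · -- the orbit map of `τ`, extended by the orbit of `a` at the new point, is `σ`-invariant
    have := eq_of_sameCycle
      (fun o : Option X => (Quotient.mk (SameCycle.setoid τ) (o.getD a))) ?_ h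
    · exact Quotient.exact this
    · intro o
      apply Quotient.sound
      change SameCycle τ _ _
      cases o with
      | none => rw [hnone]; exact SameCycle.refl _ _
      | some x =>
        by_cases hx : τ x = a
        · rw [hsome' x hx]
          simpa [← hx] using SameCycle.refl _ _
        · rw [hsome x hx]
          simpa using SameCycle.refl _ _
  · have := eq_of_sameCycle
      (fun x : X => (Quotient.mk (SameCycle.setoid σ) (some x)))
      (fun x => Quotient.sound (hstep x)) h
    exact Quotient.exact this
  · cases y with
    | none => exact ⟨a, by rw [← hnone]; simpa using SameCycle.refl _ _⟩
    | some y => exact ⟨y, SameCycle.refl _ _⟩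

theorem orbitCount_optionCongr_ne_one {X : Type*} [Nonempty X] (τ : Perm X) :
    orbitCount τ.optionCongr ≠ 1 := by
  intro h
  obtain ⟨a⟩ := ‹Nonempty X›
  have := (Nat.card_eq_one_iff_unique.1 h).1
  have hs : SameCycle τ.optionCongr none (some a) :=
    Quotient.exact (s := SameCycle.setoid τ.optionCongr) (Subsingleton.elim _ _)
  have := eq_of_sameCycle Option.isSome (by intro x; cases x <;> simp) hs
  simp at this

theorem card_fullCycleType {n : ℕ} (σ : Perm (Fin n)) :
    Multiset.card (fullCycleType σ) = orbitCount σ := by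
  have hfix : n - σ.cycleType.sum = Fintype.card {x // x ∉ σ.support} := by
    rw [Fintype.card_subtype_compl, sum_cycleType, Fintype.card_fin, Fintype.card_coe]
  have hc : Multiset.card σ.cycleType = Fintype.card σ.cycleFactorsFinset := by
    rw [cycleType_def]; simp
  rw [fullCycleType, Multiset.card_add, Multiset.card_replicate, hfix, hc, ← Fintype.card_sum,
    ← Nat.card_eq_fintype_card]
  -- a nontrivial orbit is recorded by its cycle factor, a fixed point by itself
  let F : Fin n → σ.cycleFactorsFinset ⊕ {x // x ∉ σ.support} := fun x =>
    if h : x ∈ σ.support then .inl ⟨σ.cycleOf x, cycleOf_mem_cycleFactorsFinset_iff.2 h⟩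
    else .inr ⟨x, h⟩
  have hF : ∀ x y, SameCycle σ x y ↔ F x = F y := by
    intro x y
    constructor
    · refine eq_of_sameCycle F (fun x => ?_)
      by_cases h : x ∈ σ.support
      · have h' : σ x ∈ σ.support := apply_mem_support.2 h
        simp only [F, h, h', dite_true]
        congr 2
        exact (SameCycle.cycleOf_eq (by simpa using SameCycle.refl _ _))
      · rw [notMem_support.1 h]
    · intro h
      by_cases hx : x ∈ σ.support <;> by_cases hy : y ∈ σ.support <;>
        simp only [F, hx, hy, dite_true, dite_false,
          Sum.inl.injEq, Sum.inr.injEq, Subtype.mk.injEq, reduceCtorEq] at h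
      · exact (sameCycle_iff_cycleOf_eq_of_mem_support hx hy).2 h
      · rw [h]
  symm
  refine Nat.card_eq_of_bijective
    (Quotient.lift (s := SameCycle.setoid σ) F fun x y h => (hF x y).1 h) ⟨?_, ?_⟩
  · intro a b
    induction a using Quotient.inductionOn
    induction b using Quotient.inductionOn
    intro h
    exact Quotient.sound ((hF _ _).2 h)
  · rintro (⟨c, hc⟩ | ⟨x, hx⟩)
    · obtain ⟨x, hx⟩ := (mem_cycleFactorsFinset_iff.1 hc).1.nonempty_support
      have hxs := mem_cycleFactorsFinset_support_le hc hx
      refine ⟨Quotient.mk _ x, ?_⟩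
      change F x = _
      simp only [F, hxs, dite_true]
      congr 2
      exact ((cycle_is_cycleOf hx hc)).symm
    · refine ⟨Quotient.mk _ x, ?_⟩
      change F x = _
      simp only [F, hx, dite_false]

/-! ### Cycle types -/

theorem sum_fullCycleType {n : ℕ} (σ : Perm (Fin n)) : (fullCycleType σ).sum = n := by
  have := sum_cycleType_le σ
  simp only [Fintype.card_fin] at this
  simp [fullCycleType, this]

theorem fullCycleType_eq_singleton_iff {n : ℕ} (σ : Perm (Fin n)) :
    fullCycleType σ = {n} ↔ orbitCount σ = 1 := by
  rw [← card_fullCycleType, Multiset.card_eq_one]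
  constructor
  · exact fun h => ⟨n, h⟩
  · rintro ⟨a, ha⟩
    have := sum_fullCycleType σ
    rw [ha, Multiset.sum_singleton] at this
    rw [ha, this]

theorem fullCycleType_eq_cons_replicate_iff {i j : ℕ} (hi : 2 ≤ i) (β : Perm (Fin (i + j))) :
    fullCycleType β = i ::ₘ Multiset.replicate j 1 ↔ β.cycleType = {i} := by
  constructor
  · intro h
    -- the nontrivial cycles are the parts different from `1`
    have h2 := congrArg (Multiset.filter (· ≠ 1)) h
    rw [fullCycleType, Multiset.filter_add, Multiset.filter_cons_of_pos _ (by omega),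
      Multiset.filter_eq_self.2, Multiset.filter_eq_nil.2, Multiset.filter_eq_nil.2] at h2
    · simpa using h2
    · intro a ha; simp [Multiset.eq_of_mem_replicate ha]
    · intro a ha; simp [Multiset.eq_of_mem_replicate ha]
    · intro a ha; have := two_le_of_mem_cycleType ha; omega
  · intro h
    simp [fullCycleType, h]

/-! ### Adding fixed points to `β` -/

theorem fullCycleCount_permCongr {X Y : Type*} (e : X ≃ Y) (β : Perm X) (m : ℕ) :
    fullCycleCount (e.permCongr β) m = fullCycleCount β m := by
  refine (Nat.card_congr (e.permCongr.subtypeEquiv fun α => ?_)).symm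
  have : e.permCongr α * e.permCongr β = e.permCongr (α * β) :=
    (map_mul e.permCongrHom α β).symm
  rw [this, orbitCount_permCongr, orbitCount_permCongr]

theorem fullCycleCount_eq_of_cycleType_eq {n : ℕ} {β γ : Perm (Fin n)}
    (h : β.cycleType = γ.cycleType) (m : ℕ) : fullCycleCount β m = fullCycleCount γ m := by
  obtain ⟨c, rfl⟩ := isConj_iff.1 ((isConj_iff_cycleType_eq).2 h)
  exact (fullCycleCount_permCongr c β m).symm

/-- If `β` gains a fixed point `none`, deleting `none` from its cycle in `α` is a
`card X`-to-one map on the counted full cycles: it commutes with right multiplication by `β` and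
preserves the orbit counts of `α` and `α * β`. -/
theorem fullCycleCount_optionCongr {X : Type*} [DecidableEq X] [Fintype X] [Nonempty X]
    (β : Perm X) (m : ℕ) :
    fullCycleCount β.optionCongr m = Fintype.card X * fullCycleCount β m := by
  rw [← Nat.card_eq_fintype_card, fullCycleCount, fullCycleCount, ← Nat.card_prod]
  have hmul : ∀ (o : Option X) (τ : Perm X),
      swap none o * τ.optionCongr * β.optionCongr = swap none o * (τ * β).optionCongr := by
    intro o τ
    ext1 x
    cases x <;> simp
  symm
  refine Nat.card_eq_of_bijective (fun p => ⟨swap none (some p.1) * p.2.1.optionCongr, ?_⟩)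
    ⟨?_, ?_⟩
  · rw [hmul, orbitCount_swap_mul_optionCongr, orbitCount_swap_mul_optionCongr]
    exact p.2.2
  · rintro ⟨a, τ, hτ⟩ ⟨b, ρ, hρ⟩ h
    have h1 := congrArg Subtype.val h
    have h2 : decomposeOption.symm (some a, τ) = decomposeOption.symm (some b, ρ) := h1
    have h3 := decomposeOption.symm.injective h2
    simpa using h3
  · rintro ⟨α, h1, h2⟩
    obtain ⟨⟨o, τ⟩, rfl⟩ := decomposeOption.symm.surjective α
    change orbitCount (swap none o * τ.optionCongr) = 1 at h1
    change orbitCount (swap none o * τ.optionCongr * β.optionCongr) = m at h2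
    cases o with
    | none => simp [← Perm.one_def, orbitCount_optionCongr_ne_one] at h1
    | some a =>
      rw [hmul, orbitCount_swap_mul_optionCongr] at h2
      rw [orbitCount_swap_mul_optionCongr] at h1
      exact ⟨⟨a, τ, h1, h2⟩, rfl⟩

theorem exists_fullCycleCount_eq {i : ℕ} (hi : 2 ≤ i) (b : Perm (Fin i)) (hb : b.cycleType = {i})
    (m j : ℕ) : ∃ β : Perm (Fin (i + j)), β.cycleType = {i} ∧
      fullCycleCount β m = (i + j - 1).descFactorial j * fullCycleCount b m := by
  induction j with
  | zero => exact ⟨b, hb, by simp⟩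
  | succ j ih =>
    obtain ⟨β, h1, h2⟩ := ih
    have : NeZero (i + j) := ⟨by omega⟩
    refine ⟨(finSuccEquiv (i + j)).symm.permCongr β.optionCongr, ?_, ?_⟩
    · have : (finSuccEquiv (i + j)).symm.permCongr β.optionCongr
          = β.extendDomain (finSuccAboveEquiv (0 : Fin (i + j + 1))) := by
        ext1 x
        refine Fin.cases ?_ (fun x => ?_) x
        · rw [extendDomain_apply_not_subtype _ _ (by simp)]
          simp [permCongr_apply]
        · have hx := extendDomain_apply_image β (finSuccAboveEquiv (0 : Fin (i + j + 1))) x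
          simp only [finSuccAboveEquiv_apply, Fin.zero_succAbove] at hx
          rw [hx]
          simp [permCongr_apply]
      rw [this, cycleType_extendDomain, h1]
    · rw [fullCycleCount_permCongr, fullCycleCount_optionCongr, h2, Fintype.card_fin, ← mul_assoc]
      congr 1
      obtain ⟨k, rfl⟩ : ∃ k, i = k + 1 := ⟨i - 1, by omega⟩
      rw [show k + 1 + (j + 1) - 1 = (k + j) + 1 by omega, Nat.succ_descFactorial_succ,
        show k + 1 + j - 1 = k + j by omega]
      congr 1
      omega

/-! ### Counting triples -/

/-- `(σ, α, β)` is determined by `(α, β)`, and the number of admissible `α` is the same for every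
`β` of cycle type `(i, 1 ^ j)`. -/
theorem tripleCount_eq {i j : ℕ} (hi : 2 ≤ i) (m : ℕ) (b : Perm (Fin (i + j)))
    (hb : b.cycleType = {i}) :
    tripleCount (i + j) m {i + j} (i ::ₘ Multiset.replicate j 1)
      = (i - 1).factorial * (i + j).choose i * fullCycleCount b m := by
  have hcard := card_of_cycleType_singleton (α := Fin (i + j)) hi (by simp)
  rw [Fintype.card_fin] at hcard
  rw [← hcard, ← Fintype.card_subtype, ← Nat.card_eq_fintype_card, fullCycleCount,
    ← Nat.card_prod, tripleCount]
  have e : {t : Perm (Fin (i + j)) × Perm (Fin (i + j)) × Perm (Fin (i + j)) //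
      t.1 * t.2.1 * t.2.2 = 1 ∧ fullCycleType t.2.1 = {i + j} ∧
        fullCycleType t.2.2 = i ::ₘ Multiset.replicate j 1 ∧
        Multiset.card (fullCycleType t.1) = m} ≃
      (Σ β : {β : Perm (Fin (i + j)) // β.cycleType = {i}},
        {α : Perm (Fin (i + j)) // orbitCount α = 1 ∧ orbitCount (α * β.1) = m}) :=
    { toFun := fun t => ⟨⟨t.1.2.2, (fullCycleType_eq_cons_replicate_iff hi _).1 t.2.2.2.1⟩,
        ⟨t.1.2.1, (fullCycleType_eq_singleton_iff _).1 t.2.2.1, by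
          obtain ⟨⟨σ, α, β⟩, h, -, -, h4⟩ := t
          rw [card_fullCycleType] at h4
          have : α * β = σ⁻¹ := eq_inv_of_mul_eq_one_right (by rw [← mul_assoc]; exact h)
          change orbitCount (α * β) = m
          rw [this, orbitCount_inv]
          exact h4⟩⟩
      invFun := fun p => ⟨((p.2.1 * p.1.1)⁻¹, p.2.1, p.1.1), by group,
        (fullCycleType_eq_singleton_iff _).2 p.2.2.1,
        (fullCycleType_eq_cons_replicate_iff hi _).2 p.1.2, by
          rw [card_fullCycleType, orbitCount_inv]; exact p.2.2.2⟩
      left_inv := by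
        rintro ⟨⟨σ, α, β⟩, h, h'⟩
        ext1
        refine Prod.ext ?_ rfl
        change (α * β)⁻¹ = σ
        exact inv_eq_of_mul_eq_one_left (by rw [← mul_assoc]; exact h)
      right_inv := fun _ => rfl }
  rw [Nat.card_congr e, Nat.card_sigma, Nat.card_prod]
  have : ∀ β : {β : Perm (Fin (i + j)) // β.cycleType = {i}},
      Nat.card {α : Perm (Fin (i + j)) // orbitCount α = 1 ∧ orbitCount (α * β.1) = m}
        = fullCycleCount b m := fun β =>
    fullCycleCount_eq_of_cycleType_eq (β.2.trans hb.symm) m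
  simp only [this, Finset.sum_const, smul_eq_mul, Finset.card_univ, Nat.card_eq_fintype_card,
    fullCycleCount]

/-- For `i ≥ 2`, `j ≥ 0` and `m ≥ 1`:
`a(m, (i+j), (i,1^j)) = (i+j)_j (i+j-1)_j / j! · a(m, (i), (i))`. -/
theorem stmt9 (i j m : ℕ) (hi : 2 ≤ i) (hm : 1 ≤ m) :
    (tripleCount (i + j) m {i + j} (i ::ₘ Multiset.replicate j 1) : ℚ)
      = ((i + j).descFactorial j * (i + j - 1).descFactorial j : ℚ) / j.factorial
        * tripleCount i m {i} {i} := by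
  have hb := cycleType_finRotate_of_le hi
  obtain ⟨β, hβ, hcount⟩ := exists_fullCycleCount_eq hi (finRotate i) hb m j
  have h0 : tripleCount i m {i} {i} = (i - 1).factorial * fullCycleCount (finRotate i) m := by
    have := tripleCount_eq (j := 0) hi m (finRotate i) hb
    simpa using this
  rw [tripleCount_eq hi m β hβ, h0, hcount, Nat.choose_symm_add,
    Nat.descFactorial_eq_factorial_mul_choose (i + j) j]
  have : (j.factorial : ℚ) ≠ 0 := by positivity
  push_cast
  field_simp
end

section
/- Let i ≥ 2 and 0 ≤ t ≤ j ≤ i+t, and let m ≥ 1. Consider a_0(m, (i+t, 1^{j−t}), (i, 1^j)), the count on an (i+j)-element set. If i−j+t ≥ 1, then a_0(m, (i+t, 1^{j−t}), (i, 1^j)) = [ (i+j)! / (i−j+t)! ] · C(i−1, j−t) · C(i+t−1, j) · a(m, (i−j+t), (i−j+t)), where a(m, (i−j+t), (i−j+t)) counts triples on an (i−j+t)-element set. If i−j+t = 0, then a_0(m, (i+t, 1^{j−t}), (i, 1^j)) = (i+j)! / (i·(i+t)) if m = 2, and 0 otherwise. -/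
/-- `tripleCount0 N m lam mu` counts the triples as in `tripleCount` in which moreover
`α` and `β` have no common fixed point. -/
noncomputable def tripleCount0 (N m : ℕ) (lam mu : Multiset ℕ) : ℕ :=
  Nat.card {t : Equiv.Perm (Fin N) × Equiv.Perm (Fin N) × Equiv.Perm (Fin N) //
    t.1 * t.2.1 * t.2.2 = 1 ∧ fullCycleType t.2.1 = lam ∧ fullCycleType t.2.2 = mu ∧
    Multiset.card (fullCycleType t.1) = m ∧
    ∀ x, ¬(t.2.1 x = x ∧ t.2.2 x = x)}

namespace CyclePair

open Equiv Equiv.Perm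

/-! ### Orbits under insertion of a point -/

/-- The number of orbits of `σ`, fixed points included. -/
def orb {N : ℕ} (σ : Perm (Fin N)) : ℕ := Multiset.card (fullCycleType σ)

/-- `α` permutes `A` cyclically and fixes every point outside `A`. Unlike `Equiv.Perm.IsCycle`, this
makes sense for a one-element `A`, where it says `α = 1`. -/
def CycOn {N : ℕ} (α : Perm (Fin N)) (A : Finset (Fin N)) : Prop :=
  (∀ u ∈ A, ∀ v ∈ A, SameCycle α u v) ∧ ∀ u, u ∉ A → α u = u

theorem sameCycle_induct {N : ℕ} {f : Perm (Fin N)} {R : Fin N → Fin N → Prop}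
    (hr : ∀ u, R u u) (ht : ∀ u v w, R u v → R v w → R u w) (h : ∀ u, R u (f u))
    {u v : Fin N} (huv : SameCycle f u v) : R u v := by
  obtain ⟨n, rfl⟩ := huv.exists_nat_pow_eq
  clear huv
  induction n with
  | zero => exact hr _
  | succ n ih =>
    rw [pow_succ', Perm.mul_apply]
    exact ht _ _ _ ih (h _)

/-- If `τ` fixes `x`, the orbits of `swap x y * τ` are those of `τ`, with `x` merged into the orbit
of `y`. -/
theorem sameCycle_swap_mul {N : ℕ} {τ : Perm (Fin N)} {x y : Fin N} (hx : τ x = x) (u v : Fin N) :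
    SameCycle (swap x y * τ) u v ↔
      SameCycle τ (if u = x then y else u) (if v = x then y else v) := by
  have hxy : SameCycle (swap x y * τ) x y := by
    refine ⟨1, ?_⟩
    simp [hx]
  constructor
  · intro h
    refine sameCycle_induct (f := swap x y * τ)
      (R := fun u v => SameCycle τ (if u = x then y else u) (if v = x then y else v))
      (fun u => SameCycle.refl _ _) (fun u v w h1 h2 => h1.trans h2) (fun u => ?_) h
    rw [Perm.mul_apply]
    by_cases hu : u = x
    · subst hu
      rw [hx, swap_apply_left, if_pos rfl]
      split_ifs <;> exact SameCycle.refl _ _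
    · have hτ : τ u ≠ x := fun h' => hu (τ.injective (h'.trans hx.symm))
      rw [if_neg hu]
      by_cases hy : τ u = y
      · rw [hy, swap_apply_right, if_pos rfl, ← hy]
        exact ⟨1, by simp⟩
      · rw [swap_apply_of_ne_of_ne hτ hy, if_neg hτ]
        exact ⟨1, by simp⟩
  · intro h
    have key : ∀ u v, SameCycle τ u v → SameCycle (swap x y * τ) u v := by
      intro u v h
      refine sameCycle_induct (f := τ) (R := SameCycle (swap x y * τ))
        (fun u => SameCycle.refl _ _) (fun u v w h1 h2 => h1.trans h2) (fun u => ?_) h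
      by_cases hu : u = x
      · subst hu
        rw [hx]
      have hτ : τ u ≠ x := fun h' => hu (τ.injective (h'.trans hx.symm))
      by_cases hy : τ u = y
      · have : SameCycle (swap x y * τ) u x := ⟨1, by simp [hy]⟩
        rw [hy]
        exact this.trans hxy
      · exact ⟨1, by simp [swap_apply_of_ne_of_ne hτ hy]⟩
    have hr : ∀ u, SameCycle (swap x y * τ) u (if u = x then y else u) := by
      intro u
      split_ifs with hu
      · rw [hu]; exact hxy
      · exact SameCycle.refl _ _
    exact ((hr u).trans (key _ _ h)).trans (hr v).symm

/-- The orbits counted by `fullCycleType` are the classes of `SameCycle`. -/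
theorem orb_eq {N : ℕ} (σ : Perm (Fin N)) :
    orb σ = Nat.card (Quotient (SameCycle.setoid σ)) := by
  classical
  -- An orbit is recorded as a fixed point or as a nontrivial cycle factor.
  let f : Fin N → Fin N ⊕ Perm (Fin N) :=
    fun u => if σ u = u then Sum.inl u else Sum.inr (σ.cycleOf u)
  have hf : ∀ u v, SameCycle σ u v ↔ f u = f v := by
    intro u v
    by_cases hu : σ u = u <;> by_cases hv : σ v = v
    · simp only [f, hu, hv, if_true, Sum.inl.injEq]
      exact ⟨fun h => h.eq_of_left hu, fun h => h ▸ SameCycle.refl _ _⟩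
    · simp only [f, hu, hv, if_true, if_false, reduceCtorEq, iff_false]
      exact fun h => hv (h.apply_eq_self_iff.1 hu)
    · simp only [f, hu, hv, if_true, if_false, reduceCtorEq, iff_false]
      exact fun h => hu (h.apply_eq_self_iff.2 hv)
    · simp only [f, hu, hv, if_false, Sum.inr.injEq]
      exact sameCycle_iff_cycleOf_eq_of_mem_support (mem_support.2 hu) (mem_support.2 hv)
  let g : Quotient (SameCycle.setoid σ) → Fin N ⊕ Perm (Fin N) :=
    Quotient.lift f (fun u v h => (hf u v).1 h)
  have hg : Function.Injective g := by
    intro a b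
    induction a using Quotient.inductionOn
    induction b using Quotient.inductionOn
    intro h
    exact Quotient.sound ((hf _ _).2 h)
  have hrange : Set.range g =
      ((σ.supportᶜ).disjSum σ.cycleFactorsFinset : Finset (Fin N ⊕ Perm (Fin N))) := by
    ext z
    have : z ∈ Set.range g ↔ ∃ u, f u = z := by
      constructor
      · rintro ⟨a, rfl⟩
        induction a using Quotient.inductionOn with
        | h u => exact ⟨u, rfl⟩
      · rintro ⟨u, rfl⟩
        exact ⟨Quotient.mk _ u, rfl⟩
    rw [this]
    rcases z with w | c
    · simp only [f, Finset.mem_coe, Finset.inl_mem_disjSum, Finset.mem_compl, mem_support, not_not]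
      constructor
      · rintro ⟨u, h⟩
        split_ifs at h with h1
        rw [Sum.inl.injEq] at h
        rwa [← h]
      · intro h
        exact ⟨w, by rw [if_pos h]⟩
    · simp only [f, Finset.mem_coe, Finset.inr_mem_disjSum]
      constructor
      · rintro ⟨u, h⟩
        split_ifs at h with h1
        rw [Sum.inr.injEq] at h
        rw [← h]
        exact cycleOf_mem_cycleFactorsFinset_iff.2 (mem_support.2 h1)
      · intro h
        obtain ⟨u, hu⟩ := (mem_cycleFactorsFinset_iff.1 h).1.nonempty_support
        have h2 := cycle_is_cycleOf hu h
        refine ⟨u, ?_⟩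
        rw [if_neg, ← h2]
        have := cycleOf_mem_cycleFactorsFinset_iff.1 (h2 ▸ h)
        exact mem_support.1 this
  rw [← Nat.card_range_of_injective hg, hrange, Nat.card_coe_set_eq, Set.ncard_coe_finset,
    Finset.card_disjSum, orb, fullCycleType, Multiset.card_add, Multiset.card_replicate,
    sum_cycleType, Finset.card_compl, Fintype.card_fin, add_comm]
  congr 1
  simp [cycleType_def]

/-- Inserting a fixed point `x` of `τ` into the orbit of another point `y` destroys exactly one
orbit, namely `{x}`. -/
theorem orb_swap_mul {N : ℕ} {τ : Perm (Fin N)} {x y : Fin N} (hx : τ x = x) (hxy : y ≠ x) :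
    orb τ = orb (swap x y * τ) + 1 := by
  classical
  rw [orb_eq, orb_eq, Nat.card_eq_fintype_card, Nat.card_eq_fintype_card]
  rw [← Fintype.card_option]
  have hne : ∀ u, u ≠ x → ¬ SameCycle τ x u := fun u hu h => hu (h.eq_of_left hx).symm
  let F : Option (Quotient (SameCycle.setoid (swap x y * τ))) → Quotient (SameCycle.setoid τ) :=
    fun o => o.elim (Quotient.mk _ x) (Quotient.lift
      (fun u => Quotient.mk (SameCycle.setoid τ) (if u = x then y else u))
      (fun u v h => Quotient.sound ((sameCycle_swap_mul hx u v).1 h)))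
  have hr : ∀ u, (if u = x then y else u) ≠ x := by
    intro u; split_ifs with h
    · exact hxy
    · exact h
  refine (Fintype.card_of_bijective (f := F) ⟨?_, ?_⟩).symm
  · intro a b h
    rcases a with _ | a <;> rcases b with _ | b
    · rfl
    · induction b using Quotient.inductionOn with
      | h u => exact absurd (Quotient.exact h) (hne _ (hr u))
    · induction a using Quotient.inductionOn with
      | h u => exact absurd (Quotient.exact h.symm) (hne _ (hr u))
    · induction a using Quotient.inductionOn with
      | h u =>
        induction b using Quotient.inductionOn with
        | h v =>
          exact congrArg some (Quotient.sound ((sameCycle_swap_mul hx u v).2 (Quotient.exact h)))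
  · intro q
    induction q using Quotient.inductionOn with
    | h u =>
      by_cases hu : u = x
      · exact ⟨none, by rw [hu]; rfl⟩
      · refine ⟨some (Quotient.mk _ u), ?_⟩
        change Quotient.mk (SameCycle.setoid τ) (if u = x then y else u) = _
        rw [if_neg hu]

/-! ### Inserting points into a cycle -/

/-- Multiplying by `swap x y` inserts `x` into the cycle, directly before `y`. -/
theorem cycOn_swap_mul {N : ℕ} {α : Perm (Fin N)} {A : Finset (Fin N)} {x y : Fin N}
    (hxA : x ∉ A) (hyA : y ∈ A) (h : CycOn α A) : CycOn (swap x y * α) (insert x A) := by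
  have hx : α x = x := h.2 x hxA
  constructor
  · intro u hu v hv
    rw [sameCycle_swap_mul hx]
    apply h.1
    · split_ifs with h1
      · exact hyA
      · exact Finset.mem_of_mem_insert_of_ne hu h1
    · split_ifs with h1
      · exact hyA
      · exact Finset.mem_of_mem_insert_of_ne hv h1
  · intro u hu
    rw [Finset.mem_insert, not_or] at hu
    rw [Perm.mul_apply, h.2 u hu.2, swap_apply_of_ne_of_ne hu.1]
    rintro rfl
    exact hu.2 hyA

theorem CycOn.apply_mem {N : ℕ} {α : Perm (Fin N)} {A : Finset (Fin N)} (h : CycOn α A)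
    {u : Fin N} (hu : u ∈ A) : α u ∈ A := by
  by_contra h1
  have := α.injective (h.2 _ h1)
  rw [this] at h1
  exact h1 hu

/-- Converse of `cycOn_swap_mul`: a point can be deleted from a cycle of length at least two, and
the cycle is recovered by inserting it before its image `α x`. -/
theorem CycOn.remove {N : ℕ} {α : Perm (Fin N)} {A : Finset (Fin N)} {x : Fin N}
    (hxA : x ∉ A) (hA : A.Nonempty) (h : CycOn α (insert x A)) :
    α x ∈ A ∧ CycOn (swap x (α x) * α) A := by
  obtain ⟨a, ha⟩ := hA
  have hax : a ≠ x := by rintro rfl; exact hxA ha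
  have hαx : α x ≠ x := by
    intro h1
    exact hax ((h.1 x (Finset.mem_insert_self _ _) a
      (Finset.mem_insert_of_mem ha)).eq_of_left h1).symm
  have hmem : α x ∈ A :=
    Finset.mem_of_mem_insert_of_ne (h.apply_mem (Finset.mem_insert_self _ _)) hαx
  have hfix : (swap x (α x) * α) x = x := by simp
  have hback : swap x (α x) * (swap x (α x) * α) = α := by simp
  refine ⟨hmem, ?_, ?_⟩
  · intro u hu v hv
    have h2 := h.1 u (Finset.mem_insert_of_mem hu) v (Finset.mem_insert_of_mem hv)
    rw [← hback, sameCycle_swap_mul hfix, if_neg, if_neg] at h2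
    · exact h2
    · rintro rfl; exact hxA hv
    · rintro rfl; exact hxA hu
  · intro u hu
    by_cases hux : u = x
    · rw [hux, hfix]
    · have : u ∉ insert x A := by simp [hux, hu]
      rw [Perm.mul_apply, h.2 u this, swap_apply_of_ne_of_ne hux]
      rintro rfl
      exact hu hmem

/-! ### Counting pairs of cycles with given supports -/

open Classical in
/-- The set of pairs `(α, β)` such that `α` is a cycle on `A`, `β` is a cycle on `B`, and `α * β`
has `m` orbits on the whole of `Fin N`. -/
noncomputable def pairs {N : ℕ} (A B : Finset (Fin N)) (m : ℕ) :
    Finset (Perm (Fin N) × Perm (Fin N)) :=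
  Finset.univ.filter fun p => CycOn p.1 A ∧ CycOn p.2 B ∧ orb (p.1 * p.2) = m

theorem mem_pairs {N : ℕ} {A B : Finset (Fin N)} {m : ℕ} {p : Perm (Fin N) × Perm (Fin N)} :
    p ∈ pairs A B m ↔ CycOn p.1 A ∧ CycOn p.2 B ∧ orb (p.1 * p.2) = m := by
  simp [pairs]

/-- A point `x` outside `A ∪ B` can be inserted into the cycle on `A` at `A.card` places, and each
insertion destroys the orbit `{x}` of the product. -/
theorem card_pairs_insert {N : ℕ} {A B : Finset (Fin N)} {x : Fin N} (hxA : x ∉ A) (hxB : x ∉ B)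
    (hA : A.Nonempty) (m : ℕ) :
    (pairs (insert x A) B m).card = A.card * (pairs A B (m + 1)).card := by
  classical
  rw [← Finset.card_product]
  symm
  refine Finset.card_bij' (fun q _ => (swap x q.1 * q.2.1, q.2.2))
    (fun p _ => (p.1 x, swap x (p.1 x) * p.1, p.2)) ?_ ?_ ?_ ?_
  · rintro ⟨y, α, β⟩ hq
    rw [Finset.mem_product, mem_pairs] at hq
    obtain ⟨hy, h1, h2, h3⟩ := hq
    dsimp only at hy h1 h2 h3
    rw [mem_pairs]
    refine ⟨cycOn_swap_mul hxA hy h1, h2, ?_⟩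
    have hfix : (α * β) x = x := by rw [Perm.mul_apply, h2.2 x hxB, h1.2 x hxA]
    have hne : y ≠ x := by rintro rfl; exact hxA hy
    have := orb_swap_mul hfix hne
    rw [← mul_assoc] at this
    dsimp only
    omega
  · rintro ⟨α, β⟩ hp
    rw [mem_pairs] at hp
    obtain ⟨h1, h2, h3⟩ := hp
    dsimp only at h1 h2 h3
    obtain ⟨h4, h5⟩ := h1.remove hxA hA
    rw [Finset.mem_product, mem_pairs]
    refine ⟨h4, h5, h2, ?_⟩
    dsimp only
    have hfix : (swap x (α x) * α * β) x = x := by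
      rw [Perm.mul_apply, h2.2 x hxB, Perm.mul_apply, swap_apply_right]
    have hne : α x ≠ x := by intro h; rw [h] at h4; exact hxA h4
    have := orb_swap_mul hfix hne
    rw [this, ← h3, mul_assoc (swap _ _), swap_mul_self_mul]
  · rintro ⟨y, α, β⟩ hq
    rw [Finset.mem_product, mem_pairs] at hq
    obtain ⟨hy, h1, h2, h3⟩ := hq
    have hx := h1.2 x hxA
    dsimp only at hx
    simp [hx]
  · rintro ⟨α, β⟩ hp
    simp

theorem orb_mul_comm {N : ℕ} (α β : Perm (Fin N)) : orb (α * β) = orb (β * α) := by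
  have : (α * β).cycleType = (β * α).cycleType := by
    rw [← cycleType_conj (σ := β * α) (τ := α)]
    congr 1
    group
  rw [orb, orb, fullCycleType, fullCycleType, this]

theorem card_pairs_comm {N : ℕ} (A B : Finset (Fin N)) (m : ℕ) :
    (pairs A B m).card = (pairs B A m).card := by
  refine Finset.card_bij' (fun p _ => p.swap) (fun p _ => p.swap) ?_ ?_ ?_ ?_
  · intro p hp
    rw [mem_pairs] at hp ⊢
    exact ⟨hp.2.1, hp.1, by rw [← hp.2.2, orb_mul_comm]; rfl⟩
  · intro p hp
    rw [mem_pairs] at hp ⊢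
    exact ⟨hp.2.1, hp.1, by rw [← hp.2.2, orb_mul_comm]; rfl⟩
  · intros; rfl
  · intros; rfl

/-- Iteration of `card_pairs_insert`; the factor is
`A.card * (A.card + 1) * ⋯ * (A.card + S.card - 1)`. -/
theorem card_pairs_union_left {N : ℕ} {A B : Finset (Fin N)} (hA : A.Nonempty)
    (S : Finset (Fin N)) (hSA : Disjoint S A) (hSB : Disjoint S B) (m : ℕ) :
    (A.card - 1).factorial * (pairs (S ∪ A) B m).card =
      (S.card + A.card - 1).factorial * (pairs A B (m + S.card)).card := by
  classical
  induction S using Finset.induction_on generalizing m with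
  | empty => simp
  | insert x S hx ih =>
    rw [Finset.disjoint_insert_left] at hSA hSB
    have hpos := hA.card_pos
    have hx' : x ∉ S ∪ A := by simp [hx, hSA.1]
    rw [Finset.insert_union, card_pairs_insert hx' hSB.1 (hA.mono Finset.subset_union_right),
      Finset.card_insert_of_notMem hx, Finset.card_union_of_disjoint hSA.2]
    have := ih hSA.2 hSB.2 (m + 1)
    have e : S.card + 1 + A.card - 1 = (S.card + A.card - 1) + 1 := by omega
    have e2 : S.card + A.card - 1 + 1 = S.card + A.card := by omega
    rw [e, Nat.factorial_succ, e2, mul_left_comm, this]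
    ring_nf

theorem card_pairs_union {N : ℕ} {A B : Finset (Fin N)} (hA : A.Nonempty) (hB : B.Nonempty)
    (S T : Finset (Fin N)) (hSA : Disjoint S A) (hSB : Disjoint S B) (hTA : Disjoint T A)
    (hTB : Disjoint T B) (hST : Disjoint S T) (m : ℕ) :
    (A.card - 1).factorial * (B.card - 1).factorial * (pairs (S ∪ A) (T ∪ B) m).card =
      (S.card + A.card - 1).factorial * (T.card + B.card - 1).factorial *
        (pairs A B (m + S.card + T.card)).card := by
  have h1 := card_pairs_union_left (B := T ∪ B) hA S hSA
    (Finset.disjoint_union_right.2 ⟨hST, hSB⟩) m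
  have h2 := card_pairs_union_left hB T hTB hTA (m + S.card)
  rw [card_pairs_comm A, mul_right_comm, h1, card_pairs_comm A (T ∪ B), mul_right_comm, mul_assoc,
    mul_assoc, ← h2]

/-! ### Translation between cycle types and `CycOn` -/

theorem CycOn.support_eq {N : ℕ} {α : Perm (Fin N)} {A : Finset (Fin N)} (h : CycOn α A)
    (hA : 2 ≤ A.card) : α.support = A := by
  ext u
  rw [mem_support]
  constructor
  · intro hu
    by_contra h1
    exact hu (h.2 u h1)
  · intro hu h1
    obtain ⟨v, hv, hvu⟩ := Finset.exists_mem_ne (by omega : 1 < A.card) u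
    exact hvu ((h.1 u hu v hv).eq_of_left h1).symm

theorem fullCycleType_eq_iff {N : ℕ} {α : Perm (Fin N)} {a : ℕ} (ha : 2 ≤ a) :
    fullCycleType α = a ::ₘ Multiset.replicate (N - a) 1 ↔
      α.support.card = a ∧ CycOn α α.support := by
  constructor
  · intro h
    have h1 : α.cycleType = {a} := by
      have h2 := congrArg (Multiset.filter (fun n => 2 ≤ n)) h
      rw [fullCycleType, Multiset.filter_add, Multiset.filter_cons_of_pos _ ha,
        Multiset.filter_eq_self.2 (fun n hn => two_le_of_mem_cycleType hn),
        Multiset.filter_eq_nil.2, Multiset.filter_eq_nil.2] at h2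
      · simpa using h2
      · intro n hn; rw [Multiset.eq_of_mem_replicate hn]; omega
      · intro n hn; rw [Multiset.eq_of_mem_replicate hn]; omega
    have hc : α.IsCycle := card_cycleType_eq_one.1 (by rw [h1]; rfl)
    refine ⟨?_, ?_, ?_⟩
    · rw [← sum_cycleType, h1, Multiset.sum_singleton]
    · intro u hu v hv
      exact hc.sameCycle (mem_support.1 hu) (mem_support.1 hv)
    · intro u hu
      exact notMem_support.1 hu
  · rintro ⟨hcard, h⟩
    have hne : α.support.Nonempty := Finset.card_pos.1 (by omega)
    obtain ⟨x, hx⟩ := hne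
    have hc : α.IsCycle :=
      ⟨x, mem_support.1 hx, fun y hy => h.1 x hx y (mem_support.2 hy)⟩
    rw [fullCycleType, hc.cycleType, hcard, Multiset.sum_singleton, Multiset.singleton_add]

theorem fullCycleType_eq_singleton_iff {k : ℕ} (hk : 1 ≤ k) {α : Perm (Fin k)} :
    fullCycleType α = {k} ↔ CycOn α Finset.univ := by
  rcases hk.eq_or_lt with rfl | hk2
  · have hα : α = 1 := Subsingleton.elim _ _
    subst hα
    refine iff_of_true (by simp [fullCycleType]) ⟨fun u _ v _ => ?_, fun u _ => rfl⟩
    rw [Subsingleton.elim u v]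
  · have h := fullCycleType_eq_iff (α := α) (a := k) hk2
    rw [Nat.sub_self, Multiset.replicate_zero, Multiset.cons_zero] at h
    rw [h]
    constructor
    · rintro ⟨h1, h2⟩
      rwa [Finset.eq_univ_of_card α.support (by rw [h1, Fintype.card_fin])] at h2
    · intro h2
      have := h2.support_eq (by rw [Finset.card_univ, Fintype.card_fin]; exact hk2)
      rw [this]
      exact ⟨by rw [Finset.card_univ, Fintype.card_fin], h2⟩

theorem orb_inv {N : ℕ} (σ : Perm (Fin N)) : orb σ⁻¹ = orb σ := by
  rw [orb, orb, fullCycleType, fullCycleType, cycleType_inv]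

/-- In a triple `(σ, α, β)` with `σ * α * β = 1`, the first entry is redundant. -/
theorem card_triples {G : Type*} [Group G] (S : G → G → G → Prop) :
    Nat.card {t : G × G × G // t.1 * t.2.1 * t.2.2 = 1 ∧ S t.1 t.2.1 t.2.2} =
      Nat.card {p : G × G // S (p.1 * p.2)⁻¹ p.1 p.2} := by
  have key : ∀ t : G × G × G, t.1 * t.2.1 * t.2.2 = 1 → t.1 = (t.2.1 * t.2.2)⁻¹ := by
    intro t ht
    rw [mul_assoc] at ht
    exact eq_inv_of_mul_eq_one_left ht
  refine Nat.card_congr ⟨fun t => ⟨t.1.2, ?_⟩, fun p => ⟨((p.1.1 * p.1.2)⁻¹, p.1), ?_⟩, ?_, ?_⟩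
  · rw [← key t.1 t.2.1]
    exact t.2.2
  · exact ⟨by group, p.2⟩
  · rintro ⟨t, ht⟩
    apply Subtype.ext
    exact Prod.ext (key t ht.1).symm rfl
  · intro p
    rfl

theorem tripleCount_eq {k : ℕ} (hk : 1 ≤ k) (m : ℕ) :
    tripleCount k m {k} {k} = (pairs (Finset.univ : Finset (Fin k)) Finset.univ m).card := by
  rw [tripleCount, card_triples (fun σ α β : Perm (Fin k) => fullCycleType α = {k} ∧
    fullCycleType β = {k} ∧ Multiset.card (fullCycleType σ) = m)]
  refine Nat.subtype_card _ fun p => ?_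
  rw [mem_pairs, fullCycleType_eq_singleton_iff hk, fullCycleType_eq_singleton_iff hk]
  have := orb_inv (p.1 * p.2)
  rw [orb] at this
  rw [this]

/-- A pair of cycles on a `k`-element subset of `Fin N` amounts to a pair of full cycles on `Fin k`;
each of the other `N - k` points contributes an orbit of its own. -/
theorem card_pairs_same {N : ℕ} (C : Finset (Fin N)) (m : ℕ) :
    (pairs C C (m + (N - C.card))).card =
      (pairs (Finset.univ : Finset (Fin C.card)) Finset.univ m).card := by
  classical
  let f : Fin C.card ≃ {x // x ∈ C} := C.equivFin.symm
  have hcyc : ∀ α : Perm (Fin C.card), CycOn (α.extendDomain f) C ↔ CycOn α Finset.univ := by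
    intro α
    constructor
    · intro h
      refine ⟨fun u _ v _ => ?_, fun u hu => absurd (Finset.mem_univ u) hu⟩
      rw [← sameCycle_extendDomain (f := f)]
      exact h.1 _ (f u).2 _ (f v).2
    · intro h
      refine ⟨fun u hu v hv => ?_, fun u hu => extendDomain_apply_not_subtype _ _ hu⟩
      have := (sameCycle_extendDomain (f := f)).2
        (h.1 (f.symm ⟨u, hu⟩) (Finset.mem_univ _) (f.symm ⟨v, hv⟩) (Finset.mem_univ _))
      simpa using this
  have horb : ∀ α : Perm (Fin C.card), orb (α.extendDomain f) = orb α + (N - C.card) := by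
    intro α
    have h1 : α.cycleType.sum ≤ C.card := by
      simpa using sum_cycleType_le α
    have h2 : C.card ≤ N := by simpa using C.card_le_univ
    rw [orb, orb, fullCycleType, fullCycleType, cycleType_extendDomain]
    simp only [Multiset.card_add, Multiset.card_replicate]
    omega
  symm
  refine Finset.card_bij (fun p _ => (p.1.extendDomain f, p.2.extendDomain f)) ?_ ?_ ?_
  · intro p hp
    rw [mem_pairs] at hp ⊢
    refine ⟨(hcyc _).2 hp.1, (hcyc _).2 hp.2.1, ?_⟩
    rw [extendDomain_mul, horb, hp.2.2]
  · intro p _ q _ h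
    rw [Prod.mk.injEq] at h
    exact Prod.ext (extendDomainHom_injective f h.1) (extendDomainHom_injective f h.2)
  · have hsurj : ∀ α : Perm (Fin N), CycOn α C → ∃ α', extendDomain α' f = α := by
      intro α h
      have hα : ∀ x, α x ∈ C ↔ x ∈ C := by
        intro x
        refine ⟨fun hx => ?_, h.apply_mem⟩
        by_contra hx'
        rw [h.2 x hx'] at hx
        exact hx' hx
      refine ⟨f.symm.permCongr (α.subtypePerm hα), ?_⟩
      ext x
      by_cases hx : x ∈ C
      · rw [extendDomain_apply_subtype _ _ hx]
        simp
      · rw [extendDomain_apply_not_subtype _ _ hx, h.2 x hx]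
    rintro ⟨α, β⟩ hp
    rw [mem_pairs] at hp
    obtain ⟨h1, h2, h3⟩ := hp
    obtain ⟨α', rfl⟩ := hsurj _ h1
    obtain ⟨β', rfl⟩ := hsurj _ h2
    refine ⟨(α', β'), ?_, rfl⟩
    rw [mem_pairs]
    refine ⟨(hcyc _).1 h1, (hcyc _).1 h2, ?_⟩
    dsimp only at h3
    rw [extendDomain_mul, horb] at h3
    exact Nat.add_right_cancel h3

/-! ### Pairs of cycles with covering supports -/

theorem cycOn_singleton_iff {N : ℕ} {α : Perm (Fin N)} {x : Fin N} : CycOn α {x} ↔ α = 1 := by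
  constructor
  · intro h
    ext u
    by_cases hu : u = x
    · have := h.apply_mem (Finset.mem_singleton_self x)
      rw [hu, Finset.mem_singleton.1 this, Perm.one_apply]
    · rw [h.2 u (by simpa using hu), Perm.one_apply]
  · rintro rfl
    refine ⟨fun u hu v hv => ?_, fun u _ => rfl⟩
    rw [Finset.mem_singleton.1 hu, Finset.mem_singleton.1 hv]

theorem card_pairs_singleton {N : ℕ} (x y : Fin N) (m : ℕ) :
    (pairs {x} {y} m).card = if m = N then 1 else 0 := by
  have h1 : orb (1 : Perm (Fin N)) = N := by simp [orb, fullCycleType]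
  split_ifs with h
  · rw [Finset.card_eq_one]
    refine ⟨(1, 1), ?_⟩
    ext p
    rw [mem_pairs, cycOn_singleton_iff, cycOn_singleton_iff, Finset.mem_singleton, Prod.ext_iff]
    constructor
    · exact fun hp => ⟨hp.1, hp.2.1⟩
    · rintro ⟨hp1, hp2⟩
      exact ⟨hp1, hp2, by rw [hp1, hp2, h]; exact h1⟩
  · rw [Finset.card_eq_zero, Finset.eq_empty_iff_forall_notMem]
    intro p hp
    rw [mem_pairs, cycOn_singleton_iff, cycOn_singleton_iff] at hp
    obtain ⟨h2, h3, h4⟩ := hp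
    rw [h2, h3, mul_one, h1] at h4
    exact h h4.symm

/-- Two cycles with overlapping supports covering `Fin N`: deleting the points outside the overlap
leaves a pair of full cycles on the overlap. -/
theorem card_pairs_of_inter {N : ℕ} {A B : Finset (Fin N)} (hAB : A ∪ B = Finset.univ)
    (hC : (A ∩ B).Nonempty) (m : ℕ) :
    ((A ∩ B).card - 1).factorial * ((A ∩ B).card - 1).factorial * (pairs A B m).card =
      (A.card - 1).factorial * (B.card - 1).factorial *
        tripleCount (A ∩ B).card m {(A ∩ B).card} {(A ∩ B).card} := by
  have hk : 1 ≤ (A ∩ B).card := hC.card_pos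
  have h := card_pairs_union hC hC (A \ B) (B \ A) (by
    rw [Finset.disjoint_left]; intro x; simp; tauto) (by
    rw [Finset.disjoint_left]; intro x; simp; tauto) (by
    rw [Finset.disjoint_left]; intro x; simp; tauto) (by
    rw [Finset.disjoint_left]; intro x; simp; tauto) (by
    rw [Finset.disjoint_left]; intro x; simp; tauto) m
  have hA := Finset.card_sdiff_add_card_inter A B
  have hB := Finset.card_sdiff_add_card_inter B A
  have hU := Finset.card_union_add_card_inter A B
  rw [hAB, Finset.card_univ, Fintype.card_fin] at hU
  rw [Finset.inter_comm B A] at hB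
  have e : m + (A \ B).card + (B \ A).card = m + (N - (A ∩ B).card) := by omega
  rw [Finset.sdiff_union_inter, Finset.inter_comm A B, Finset.sdiff_union_inter,
    Finset.inter_comm B A, hA, hB, e, card_pairs_same] at h
  rw [h, tripleCount_eq hk]

/-- Two cycles with complementary supports: shrinking both to one point leaves the pair `(1, 1)`. -/
theorem card_pairs_of_disjoint {N : ℕ} {A B : Finset (Fin N)} (hAB : A ∪ B = Finset.univ)
    (hd : Disjoint A B) (hA : A.Nonempty) (hB : B.Nonempty) (m : ℕ) :
    (pairs A B m).card =
      (A.card - 1).factorial * (B.card - 1).factorial * if m = 2 then 1 else 0 := by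
  obtain ⟨x, hx⟩ := hA
  obtain ⟨y, hy⟩ := hB
  have hU := Finset.card_union_of_disjoint hd
  rw [hAB, Finset.card_univ, Fintype.card_fin] at hU
  rw [Finset.disjoint_left] at hd
  have h := card_pairs_union (Finset.singleton_nonempty x) (Finset.singleton_nonempty y)
    (A.erase x) (B.erase y) (by simp) (by simp [hd.mt (not_not.2 hy)]) (by simp [hd hx]) (by simp) (by
      rw [Finset.disjoint_left]; intro z; simp only [Finset.mem_erase]
      exact fun h1 h2 => hd h1.2 h2.2) m
  have eA := Finset.card_erase_add_one hx
  have eB := Finset.card_erase_add_one hy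
  have e : m + (A.erase x).card + (B.erase y).card = N ↔ m = 2 := by omega
  rw [Finset.union_comm (A.erase x), ← Finset.insert_eq, Finset.insert_erase hx,
    Finset.union_comm (B.erase y), ← Finset.insert_eq, Finset.insert_erase hy,
    card_pairs_singleton, Finset.card_singleton, Finset.card_singleton, eA, eB] at h
  simpa [e] using h

/-- Sets `B` with `A ∪ B` everything correspond, by complementation, to subsets of `A`. -/
theorem card_covering {N : ℕ} (A : Finset (Fin N)) {b : ℕ} (hb : b ≤ N) :
    ((Finset.powersetCard b (Finset.univ : Finset (Fin N))).filter
      fun B => A ∪ B = Finset.univ).card = A.card.choose (N - b) := by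
  rw [← Finset.card_powersetCard]
  have hcov : ∀ B : Finset (Fin N), A ∪ B = Finset.univ ↔ Bᶜ ⊆ A := by
    intro B
    rw [Finset.eq_univ_iff_forall, Finset.subset_iff]
    simp only [Finset.mem_union, Finset.mem_compl]
    exact forall_congr' fun x => by tauto
  refine Finset.card_bij' (fun B _ => Bᶜ) (fun B _ => Bᶜ) ?_ ?_ ?_ ?_
  · intro B hB
    rw [Finset.mem_filter, Finset.mem_powersetCard, hcov] at hB
    rw [Finset.mem_powersetCard, Finset.card_compl, hB.1.2, Fintype.card_fin]
    exact ⟨hB.2, rfl⟩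
  · intro B hB
    rw [Finset.mem_powersetCard] at hB
    rw [Finset.mem_filter, Finset.mem_powersetCard, hcov, compl_compl, Finset.card_compl, hB.2,
      Fintype.card_fin]
    exact ⟨⟨Finset.subset_univ _, by omega⟩, hB.1⟩
  · intros; exact compl_compl _
  · intros; exact compl_compl _

/-- If the number of pairs of cycles on `(A, B)` is the same (up to the factor `D`) for all covering
pairs `(A, B)` of sizes `a`, `b`, then `tripleCount0` is that number times the number of covering
pairs. -/
theorem mul_tripleCount0 {N a b m D E : ℕ} (ha : 2 ≤ a) (hb : 2 ≤ b) (hbN : b ≤ N)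
    (h : ∀ A B : Finset (Fin N), A.card = a → B.card = b → A ∪ B = Finset.univ →
      D * (pairs A B m).card = E) :
    D * tripleCount0 N m (a ::ₘ Multiset.replicate (N - a) 1)
      (b ::ₘ Multiset.replicate (N - b) 1) = N.choose a * a.choose (N - b) * E := by
  classical
  let s : Finset (Perm (Fin N) × Perm (Fin N)) := Finset.univ.filter fun p =>
    (p.1.support.card = a ∧ CycOn p.1 p.1.support) ∧ (p.2.support.card = b ∧
      CycOn p.2 p.2.support) ∧ orb (p.1 * p.2) = m ∧ p.1.support ∪ p.2.support = Finset.univ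
  have hs : tripleCount0 N m (a ::ₘ Multiset.replicate (N - a) 1)
      (b ::ₘ Multiset.replicate (N - b) 1) = s.card := by
    rw [tripleCount0, card_triples (fun σ α β : Perm (Fin N) =>
      fullCycleType α = a ::ₘ Multiset.replicate (N - a) 1 ∧
      fullCycleType β = b ::ₘ Multiset.replicate (N - b) 1 ∧
      Multiset.card (fullCycleType σ) = m ∧ ∀ x, ¬(α x = x ∧ β x = x))]
    refine Nat.subtype_card _ fun p => ?_
    have h1 := orb_inv (p.1 * p.2)
    rw [orb] at h1
    rw [fullCycleType_eq_iff ha, fullCycleType_eq_iff hb, h1, Finset.mem_filter,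
      Finset.eq_univ_iff_forall]
    simp only [Finset.mem_univ, true_and, Finset.mem_union, mem_support, not_and_or, ne_eq]
  let T : Finset (Σ _ : Finset (Fin N), Finset (Fin N)) :=
    (Finset.powersetCard a Finset.univ).sigma fun A =>
      (Finset.powersetCard b Finset.univ).filter fun B => A ∪ B = Finset.univ
  have hT : T.card = N.choose a * a.choose (N - b) := by
    rw [Finset.card_sigma, Finset.sum_congr rfl (g := fun _ => a.choose (N - b)),
      Finset.sum_const, Finset.card_powersetCard, Finset.card_univ, Fintype.card_fin, smul_eq_mul]
    intro A hA
    rw [card_covering A hbN, (Finset.mem_powersetCard.1 hA).2]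
  have hfib : s.card = ∑ q ∈ T, (pairs q.1 q.2 m).card := by
    rw [Finset.card_eq_sum_card_fiberwise (t := T)
      (f := fun p => (⟨p.1.support, p.2.support⟩ : Σ _ : Finset (Fin N), Finset (Fin N)))]
    · refine Finset.sum_congr rfl ?_
      rintro ⟨A, B⟩ hq
      rw [Finset.mem_sigma, Finset.mem_filter, Finset.mem_powersetCard,
        Finset.mem_powersetCard] at hq
      obtain ⟨⟨-, hA⟩, ⟨-, hB⟩, hAB⟩ := hq
      dsimp only at hA hB hAB
      congr 1
      ext p
      rw [Finset.mem_filter, Finset.mem_filter, mem_pairs]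
      constructor
      · rintro ⟨⟨-, h1, h2, h3, -⟩, h4⟩
        rw [Sigma.mk.injEq, heq_eq_eq] at h4
        rw [h4.1] at h1
        rw [h4.2] at h2
        exact ⟨h1.2, h2.2, h3⟩
      · rintro ⟨h1, h2, h3⟩
        have e1 := h1.support_eq (hA ▸ ha)
        have e2 := h2.support_eq (hB ▸ hb)
        rw [e1, e2]
        exact ⟨⟨Finset.mem_univ _, ⟨hA, h1⟩, ⟨hB, h2⟩, h3, hAB⟩, rfl⟩
    · intro p hp
      rw [Finset.mem_coe, Finset.mem_filter] at hp
      obtain ⟨-, h1, h2, -, h3⟩ := hp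
      rw [Finset.mem_coe, Finset.mem_sigma, Finset.mem_filter, Finset.mem_powersetCard,
        Finset.mem_powersetCard]
      exact ⟨⟨Finset.subset_univ _, h1.1⟩, ⟨Finset.subset_univ _, h2.1⟩, h3⟩
  rw [hs, hfib, Finset.mul_sum, Finset.sum_congr rfl (g := fun _ => E), Finset.sum_const, hT,
    smul_eq_mul]
  rintro ⟨A, B⟩ hq
  rw [Finset.mem_sigma, Finset.mem_filter, Finset.mem_powersetCard,
    Finset.mem_powersetCard] at hq
  exact h A B hq.1.2 hq.2.1.2 hq.2.2

end CyclePair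

/-- For `i ≥ 2`, `0 ≤ t ≤ j ≤ i+t` and `m ≥ 1`: if `i-j+t ≥ 1` then
`a_0(m, (i+t,1^{j-t}), (i,1^j)) = (i+j)!/(i-j+t)! · C(i-1,j-t) · C(i+t-1,j) ·
a(m, (i-j+t), (i-j+t))`, and if `i-j+t = 0` then
`a_0(m, (i+t,1^{j-t}), (i,1^j)) = (i+j)!/(i(i+t))` if `m = 2`, and `0` otherwise. -/
theorem stmt10 (i t j m : ℕ) (hi : 2 ≤ i) (htj : t ≤ j) (hji : j ≤ i + t) (hm : 1 ≤ m) :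
    (j < i + t →
      (tripleCount0 (i + j) m ((i + t) ::ₘ Multiset.replicate (j - t) 1)
          (i ::ₘ Multiset.replicate j 1) : ℚ)
        = ((i + j).factorial : ℚ) / (i + t - j).factorial
            * ((i - 1).choose (j - t)) * ((i + t - 1).choose j)
            * tripleCount (i + t - j) m {i + t - j} {i + t - j}) ∧
    (j = i + t →
      (tripleCount0 (i + j) m ((i + t) ::ₘ Multiset.replicate (j - t) 1)
          (i ::ₘ Multiset.replicate j 1) : ℚ)
        = if m = 2 then ((i + j).factorial : ℚ) / (i * (i + t)) else 0) := by
  have hN1 : i + j - (i + t) = j - t := by omega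
  have hN2 : i + j - i = j := by omega
  constructor
  · intro hlt
    -- With `s = j - t` and `q = i - 1 - s`, all subtractions disappear; the supports meet in `q + 1`
    -- points.
    obtain ⟨s, rfl⟩ := Nat.exists_eq_add_of_le' htj
    obtain ⟨q, rfl⟩ : ∃ q, i = s + q + 1 := ⟨i - s - 1, by omega⟩
    have h := CyclePair.mul_tripleCount0 (N := s + q + 1 + (s + t)) (a := s + q + 1 + t)
      (b := s + q + 1) (m := m) (D := q.factorial * q.factorial)
      (E := (s + q + t).factorial * (s + q).factorial * tripleCount (q + 1) m {q + 1} {q + 1})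
      (by omega) hi (by omega) (by
        intro A B hA hB hAB
        have hU := Finset.card_union_add_card_inter A B
        rw [hAB, Finset.card_univ, Fintype.card_fin, hA, hB] at hU
        have hk : (A ∩ B).card = q + 1 := by omega
        have := CyclePair.card_pairs_of_inter hAB (Finset.card_pos.1 (by omega)) m
        rw [hk, hA, hB] at this
        rw [show s + q + 1 + t - 1 = s + q + t by omega] at this
        exact this)
    rw [hN1, hN2, Nat.add_sub_cancel] at h
    have e1 : s + q + 1 + t - (s + t) = q + 1 := by omega
    have e2 : s + q + 1 + t - 1 = s + t + q := by omega
    rw [Nat.add_sub_cancel, Nat.add_sub_cancel, e1, e2]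
    have h' := congrArg (Nat.cast : ℕ → ℚ) h
    push_cast at h'
    have c1 : (((s + q + 1 + (s + t)).choose (s + q + 1 + t) : ℕ) : ℚ) =
        (s + q + 1 + (s + t)).factorial / ((s + q + 1 + t).factorial * s.factorial) := by
      rw [show s + q + 1 + (s + t) = s + q + 1 + t + s by ring, Nat.cast_add_choose]
    have c2 : (((s + q + 1 + t).choose (s + t) : ℕ) : ℚ) =
        (s + q + 1 + t).factorial / ((s + t).factorial * (q + 1).factorial) := by
      rw [show s + q + 1 + t = s + t + (q + 1) by ring, Nat.cast_add_choose]
    rw [c1, c2, show s + q + t = s + t + q by ring] at h'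
    rw [Nat.cast_add_choose, Nat.cast_add_choose]
    have f1 : ((q.factorial : ℕ) : ℚ) ≠ 0 := Nat.cast_ne_zero.2 (Nat.factorial_ne_zero _)
    have f2 : (((s + q + 1 + t).factorial : ℕ) : ℚ) ≠ 0 :=
      Nat.cast_ne_zero.2 (Nat.factorial_ne_zero _)
    refine mul_left_cancel₀ (mul_ne_zero f1 f1) (h'.trans ?_)
    field_simp
  · rintro rfl
    have h := CyclePair.mul_tripleCount0 (N := i + (i + t)) (a := i + t)
      (b := i) (m := m) (D := 1)
      (E := (i + t - 1).factorial * (i - 1).factorial * if m = 2 then 1 else 0)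
      (by omega) hi (by omega) (by
        intro A B hA hB hAB
        have hU := Finset.card_union_add_card_inter A B
        rw [hAB, Finset.card_univ, Fintype.card_fin, hA, hB] at hU
        have hk : (A ∩ B).card = 0 := by omega
        have := CyclePair.card_pairs_of_disjoint hAB
          (Finset.disjoint_iff_inter_eq_empty.2 (Finset.card_eq_zero.1 hk))
          (Finset.card_pos.1 (by omega)) (Finset.card_pos.1 (by omega)) m
        rw [one_mul, this, hA, hB])
    rw [hN1, hN2, one_mul, Nat.choose_self, mul_one] at h
    rw [h]
    split_ifs with hm2
    · obtain ⟨p, rfl⟩ : ∃ p, i = p + 1 := ⟨i - 1, by omega⟩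
      have e : p + 1 + t - 1 = p + t := by omega
      have e' : p + 1 + t = p + t + 1 := by omega
      rw [e, e', Nat.add_sub_cancel, mul_one]
      push_cast
      rw [add_comm (p + 1) (p + t + 1), Nat.cast_add_choose, Nat.factorial_succ (p + t),
        Nat.factorial_succ p]
      have f1 : ((p.factorial : ℕ) : ℚ) ≠ 0 := Nat.cast_ne_zero.2 (Nat.factorial_ne_zero _)
      have f2 : (((p + t).factorial : ℕ) : ℚ) ≠ 0 :=
        Nat.cast_ne_zero.2 (Nat.factorial_ne_zero _)
      push_cast
      field_simp
      ring
    · simp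
end

section
/- Let I = (i_1, …, i_k) be a composition of m and let n ≥ m. Then the number of permutations of {1,…,n} that are strongly I-separated equals n! · (i_1 − 1)! · (i_2 − 1)! ⋯ (i_k − 1)! / m!. Equivalently, the probability that a uniformly random permutation of S_n is strongly I-separated is (i_1−1)!⋯(i_k−1)!/m!. -/
/-!
Insert the elements one at a time. A permutation of `Fin (n + 1)` is uniquely obtained from a
permutation `τ` of `Fin n` either by adding the last element as a fixed point or by placing it just
before some `j : Fin n` in the cycle of `j` (`insertLast`); the cycle relation on `Fin n` is
unchanged, and the new element joins the cycle of `j`.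

Describe the blocks by a labelling `f`. As long as every element is labelled, a new element whose
label is fresh has to be a fixed point (one choice), and one whose label is already carried by
`t ≥ 1` elements may precede any one of these (`t` choices); hence a block of size `i` contributes
`(i - 1)!` (`count_succ_labelled`, `exists_labelling`). Inserting an unlabelled element is
unrestricted, so the elements `m, …, n - 1` contribute `(m + 1) ⋯ n = n! / m!`
(`count_succ_unlabelled`).
-/

/-- `inBlock L p x` means that the (0-indexed) element `x` of `{0,…,L.sum - 1}` lies in
the `p`-th consecutive block of sizes given by the composition `L`. -/
def inBlock (L : List ℕ) (p : ℕ) (x : ℕ) : Prop :=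
  (L.take p).sum ≤ x ∧ x < (L.take (p + 1)).sum

/-- `sameBlock L x y` means `x` and `y` lie in the same block of the composition `L`. -/
def sameBlock (L : List ℕ) (x y : ℕ) : Prop :=
  ∃ p < L.length, inBlock L p x ∧ inBlock L p y

/-- A permutation `σ` of `Fin n` is strongly `L`-separated if, for elements of
`{0,…,L.sum - 1}`, being in the same cycle of `σ` is equivalent to being in the same
block of `L`: each block is contained in a single cycle and no cycle meets two
different blocks. -/
def IsStronglySeparated (L : List ℕ) {n : ℕ} (σ : Equiv.Perm (Fin n)) : Prop :=
  ∀ x y : Fin n, (x : ℕ) < L.sum → (y : ℕ) < L.sum →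
    (σ.SameCycle x y ↔ sameBlock L (x : ℕ) (y : ℕ))

/-! ### Inserting one element into a permutation -/

open Equiv in
/-- An invariant function of a permutation is constant on its cycles. -/
lemma eq_of_sameCycle_s12 {β γ : Type*} [Finite β] {σ : Perm β} (F : β → γ)
    (hF : ∀ u, F (σ u) = F u) {u v : β} (h : σ.SameCycle u v) : F u = F v := by
  obtain ⟨i, -, rfl⟩ := h.exists_pow_eq'
  induction i with
  | zero => rfl
  | succ i ih =>
    rw [pow_succ', Perm.mul_apply, hF]
    exact ih ⟨i, by simp⟩

section Insertion

open Equiv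

variable {α : Type*} [DecidableEq α]

lemma decomposeOption_symm_none (i : Option α) (τ : Perm α) :
    Perm.decomposeOption.symm (i, τ) none = i := by
  simp

lemma decomposeOption_symm_some (i : Option α) (τ : Perm α) (x : α) :
    Perm.decomposeOption.symm (i, τ) (some x) = if i = some (τ x) then none else some (τ x) := by
  simp only [Perm.decomposeOption_symm_apply, Perm.mul_apply, optionCongr_apply, Option.map_some,
    swap_apply_def]
  simp [eq_comm]

/-- The cycle of `u` in the permutation obtained by inserting `none` before `i`, recorded as a cycle
of `τ`; it is `none` exactly when `u` and `i` are both `none`. -/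
def cycleOfInsert (i : Option α) (τ : Perm α) (u : Option α) :
    Option (Quotient (Perm.SameCycle.setoid τ)) :=
  (u.orElse fun _ => i).map (Quotient.mk _)

/-- `cycleOfInsert` is constant along the cycles of the permutation with `none` inserted, so elements
with different values lie in different cycles. -/
lemma cycleOfInsert_apply (i : Option α) (τ : Perm α) (u : Option α) :
    cycleOfInsert i τ (Perm.decomposeOption.symm (i, τ) u) = cycleOfInsert i τ u := by
  have key (x : α) : (Quotient.mk (Perm.SameCycle.setoid τ) (τ x)) = Quotient.mk _ x :=
    Quotient.sound (Perm.sameCycle_apply_left.2 (Perm.SameCycle.refl _ _))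
  cases u with
  | none =>
    rw [decomposeOption_symm_none]
    cases i <;> rfl
  | some x =>
    rw [decomposeOption_symm_some]
    split_ifs with h
    · subst h
      simp [cycleOfInsert, key]
    · simp [cycleOfInsert, key]

lemma sameCycle_some_some [Finite α] (i : Option α) (τ : Perm α) (x y : α) :
    (Perm.decomposeOption.symm (i, τ)).SameCycle (some x) (some y) ↔ τ.SameCycle x y := by
  constructor
  · intro h
    have := eq_of_sameCycle_s12 _ (cycleOfInsert_apply i τ) h
    simp only [cycleOfInsert, Option.orElse_some, Option.map_some, Option.some.injEq] at this
    exact Quotient.exact this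
  · intro h
    refine Quotient.exact (eq_of_sameCycle_s12 (fun x => Quotient.mk
      (Perm.SameCycle.setoid (Perm.decomposeOption.symm (i, τ))) (some x)) ?_ h)
    intro x
    refine Quotient.sound (Perm.SameCycle.symm ?_)
    by_cases hi : i = some (τ x)
    -- two steps lead from `x` to `τ x`, passing through `none`
    · refine ⟨2, ?_⟩
      have h1 : Perm.decomposeOption.symm (i, τ) (some x) = none := by
        rw [decomposeOption_symm_some, if_pos hi]
      rw [zpow_ofNat, pow_two, Perm.mul_apply, h1, decomposeOption_symm_none, hi]
    · refine ⟨1, ?_⟩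
      rw [zpow_one, decomposeOption_symm_some, if_neg hi]

lemma sameCycle_none_some [Finite α] (i : Option α) (τ : Perm α) (x : α) :
    (Perm.decomposeOption.symm (i, τ)).SameCycle none (some x) ↔
      ∃ j, i = some j ∧ τ.SameCycle j x := by
  cases i with
  | none =>
    simp only [reduceCtorEq, false_and, exists_false, iff_false]
    intro h
    have := eq_of_sameCycle_s12 _ (cycleOfInsert_apply none τ) h
    simp [cycleOfInsert] at this
  | some j =>
    rw [← Perm.sameCycle_apply_left, decomposeOption_symm_none, sameCycle_some_some]
    simp

end Insertion

lemma permCongr_sameCycle {α β : Type*} (e : α ≃ β) (σ : Equiv.Perm α) (x y : α) :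
    (e.permCongr σ).SameCycle (e x) (e y) ↔ σ.SameCycle x y := by
  have (i : ℤ) : (e.permCongr σ) ^ i = e.permCongr (σ ^ i) :=
    (map_zpow e.permCongrHom σ i).symm
  simp [Equiv.Perm.SameCycle, this]

/-- Permutations of `Fin (n + 1)` as permutations of `Fin n` with `Fin.last n` inserted: as a fixed
point (`none`) or just before `j` in the cycle of `j` (`some j`). -/
def insertLast (n : ℕ) :
    Option (Fin n) × Equiv.Perm (Fin n) ≃ Equiv.Perm (Fin (n + 1)) :=
  Equiv.Perm.decomposeOption.symm.trans (finSuccEquivLast (n := n)).symm.permCongr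

lemma insertLast_castSucc {n : ℕ} (i : Option (Fin n)) (τ : Equiv.Perm (Fin n)) (x y : Fin n) :
    (insertLast n (i, τ)).SameCycle x.castSucc y.castSucc ↔ τ.SameCycle x y := by
  rw [← sameCycle_some_some i, ← permCongr_sameCycle (finSuccEquivLast (n := n)).symm]
  simp [insertLast]

lemma insertLast_last {n : ℕ} (i : Option (Fin n)) (τ : Equiv.Perm (Fin n)) (x : Fin n) :
    (insertLast n (i, τ)).SameCycle (Fin.last n) x.castSucc ↔
      ∃ j, i = some j ∧ τ.SameCycle j x := by
  rw [← sameCycle_none_some i, ← permCongr_sameCycle (finSuccEquivLast (n := n)).symm]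
  simp [insertLast]

/-! ### Counting permutations with prescribed labels -/

/-- Among the elements below `m`, the cycles of `σ` are exactly the fibres of the labelling `f`. -/
def SeparatesLabels (f : ℕ → ℕ) (m : ℕ) {n : ℕ} (σ : Equiv.Perm (Fin n)) : Prop :=
  ∀ x y : Fin n, (x : ℕ) < m → (y : ℕ) < m → (σ.SameCycle x y ↔ f x = f y)

lemma count_succ_unlabelled (f : ℕ → ℕ) {m n : ℕ} (h : m ≤ n) :
    Nat.card {σ : Equiv.Perm (Fin (n + 1)) // SeparatesLabels f m σ} =
      (n + 1) * Nat.card {σ : Equiv.Perm (Fin n) // SeparatesLabels f m σ} := by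
  have key : ∀ p : Option (Fin n) × Equiv.Perm (Fin n),
      (p.1 ∈ Set.univ ∧ p.2 ∈ {τ | SeparatesLabels f m τ}) ↔
        SeparatesLabels f m (insertLast n p) := by
    rintro ⟨i, τ⟩
    simp only [Set.mem_univ, true_and, Set.mem_ofPred_eq]
    constructor
    · intro hS x y hx hy
      obtain ⟨x, rfl⟩ | rfl := x.eq_castSucc_or_eq_last
      · obtain ⟨y, rfl⟩ | rfl := y.eq_castSucc_or_eq_last
        · rw [insertLast_castSucc]
          exact hS x y hx hy
        · simp at hy; omega
      · simp at hx; omega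
    · intro hS x y hx hy
      rw [← insertLast_castSucc i]
      exact hS x.castSucc y.castSucc hx hy
  rw [← Nat.card_congr ((insertLast n).subtypeEquiv key),
    Nat.card_congr (Equiv.subtypeProdEquivProd (p := (· ∈ Set.univ))
      (q := (· ∈ {τ | SeparatesLabels f m τ}))),
    Nat.card_prod]
  simp

/-- The admissible insertion places for an element with label `f n` into a fully labelled
permutation of `Fin n`. -/
def places (f : ℕ → ℕ) (n : ℕ) : Set (Option (Fin n)) :=
  {i | ∀ x : Fin n, (∃ j : Fin n, i = some j ∧ f j = f x) ↔ f n = f x}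

lemma card_places (f : ℕ → ℕ) (n : ℕ) :
    Nat.card (places f n) = max 1 ((Finset.range n).filter fun j => f j = f n).card := by
  by_cases h : ∃ j : Fin n, f j = f n
  · obtain ⟨j₀, hj₀⟩ := h
    have h1 : places f n = some '' {j : Fin n | f j = f n} := by
      ext i
      simp only [places, Set.mem_ofPred_eq, Set.mem_image]
      constructor
      · intro hi
        obtain ⟨j, rfl, hj⟩ := (hi j₀).2 hj₀.symm
        exact ⟨j, hj.trans hj₀, rfl⟩
      · rintro ⟨j, hj, rfl⟩ x
        simp [hj]
    have h2 : (Finset.range n).filter (fun j => f j = f n) =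
        (Finset.univ.filter fun j : Fin n => f j = f n).map Fin.valEmbedding := by
      ext x
      simp only [Finset.mem_filter, Finset.mem_range, Finset.mem_map, Finset.mem_univ, true_and,
        Fin.valEmbedding_apply]
      constructor
      · rintro ⟨hx, h⟩
        exact ⟨⟨x, hx⟩, h, rfl⟩
      · rintro ⟨j, h, rfl⟩
        exact ⟨j.2, h⟩
    have h3 : 0 < (Finset.univ.filter fun j : Fin n => f j = f n).card :=
      Finset.card_pos.2 ⟨j₀, by simpa using hj₀⟩
    rw [h1, Nat.card_image_of_injective (Option.some_injective _), h2, Finset.card_map,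
      max_eq_right h3, Nat.card_eq_fintype_card, Fintype.card_subtype]
    simp
  · push Not at h
    have h1 : places f n = {none} := by
      ext i
      simp only [places, Set.mem_ofPred_eq, Set.mem_singleton_iff]
      constructor
      · intro hi
        cases i with
        | none => rfl
        | some j => exact absurd ((hi j).1 ⟨j, rfl, rfl⟩).symm (h j)
      · rintro rfl x
        simpa using (h x).symm
    have h2 : (Finset.range n).filter (fun j => f j = f n) = ∅ := by
      refine Finset.filter_eq_empty_iff.2 fun x hx => h ⟨x, Finset.mem_range.1 hx⟩
    rw [h1, h2]
    simp

lemma count_succ_labelled (f : ℕ → ℕ) (n : ℕ) :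
    Nat.card {σ : Equiv.Perm (Fin (n + 1)) // SeparatesLabels f (n + 1) σ} =
      max 1 ((Finset.range n).filter fun j => f j = f n).card *
        Nat.card {σ : Equiv.Perm (Fin n) // SeparatesLabels f n σ} := by
  have key : ∀ p : Option (Fin n) × Equiv.Perm (Fin n),
      (p.1 ∈ places f n ∧ p.2 ∈ {τ | SeparatesLabels f n τ}) ↔
        SeparatesLabels f (n + 1) (insertLast n p) := by
    rintro ⟨i, τ⟩
    simp only [Set.mem_ofPred_eq]
    constructor
    · rintro ⟨hi, hS⟩
      have hlast (x : Fin n) :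
          (insertLast n (i, τ)).SameCycle (Fin.last n) x.castSucc ↔ f n = f x := by
        rw [insertLast_last, ← hi x]
        exact exists_congr fun j => and_congr_right fun _ => hS j x j.2 x.2
      intro x y _ _
      obtain ⟨x, rfl⟩ | rfl := x.eq_castSucc_or_eq_last <;>
        obtain ⟨y, rfl⟩ | rfl := y.eq_castSucc_or_eq_last
      · rw [insertLast_castSucc]
        exact hS x y x.2 y.2
      · rw [Equiv.Perm.sameCycle_comm, hlast]
        simp [eq_comm]
      · rw [hlast]
        simp
      · simp [Equiv.Perm.SameCycle.refl]
    · intro hS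
      have hτ : SeparatesLabels f n τ := fun x y _ _ => by
        rw [← insertLast_castSucc i]
        exact hS x.castSucc y.castSucc x.castSucc.2 y.castSucc.2
      refine ⟨fun x => ?_, hτ⟩
      have := hS (Fin.last n) x.castSucc (Fin.last n).2 x.castSucc.2
      rw [insertLast_last] at this
      simp only [Fin.val_last, Fin.val_castSucc] at this
      rw [← this]
      exact exists_congr fun j => and_congr_right fun _ => (hτ j x j.2 x.2).symm
  rw [← Nat.card_congr ((insertLast n).subtypeEquiv key),
    Nat.card_congr (Equiv.subtypeProdEquivProd (p := (· ∈ places f n))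
      (q := (· ∈ {τ | SeparatesLabels f n τ}))),
    Nat.card_prod, ← card_places]
  rfl

lemma separatesLabels_congr {f g : ℕ → ℕ} {m n : ℕ} (h : ∀ x < m, f x = g x)
    (σ : Equiv.Perm (Fin n)) :
    SeparatesLabels f m σ ↔ SeparatesLabels g m σ := by
  refine forall₄_congr fun x y hx hy => ?_
  rw [h x hx, h y hy]

/-- Appending one more block of size `a`, with a fresh label, multiplies the count by `(a - 1)!`.
For `a = 0` nothing is appended and the factor is `0! = 1`, by truncated subtraction. -/
lemma count_append_block (f : ℕ → ℕ) (s c : ℕ) (hlt : ∀ x < s, f x ≠ c)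
    (hge : ∀ x, s ≤ x → f x = c) (a : ℕ) :
    Nat.card {σ : Equiv.Perm (Fin (s + a)) // SeparatesLabels f (s + a) σ} =
      (a - 1).factorial * Nat.card {σ : Equiv.Perm (Fin s) // SeparatesLabels f s σ} := by
  induction a with
  | zero => simp
  | succ t ih =>
    have h : ((Finset.range (s + t)).filter fun j => f j = f (s + t)) = Finset.Ico s (s + t) := by
      ext x
      simp only [Finset.mem_filter, Finset.mem_range, Finset.mem_Ico, hge (s + t) (by omega)]
      constructor
      · rintro ⟨hx, hc⟩
        exact ⟨not_lt.1 fun h => hlt x h hc, hx⟩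
      · rintro ⟨h1, h2⟩
        exact ⟨h2, hge x h1⟩
    have := count_succ_labelled f (s + t)
    rw [h, ih, Nat.card_Ico] at this
    rw [← add_assoc, this, ← mul_assoc]
    congr 1
    cases t with
    | zero => simp
    | succ t => simp [Nat.factorial_succ]

/-! ### Blocks of a composition -/

lemma inBlock_append_of_lt (L : List ℕ) (a : ℕ) {p : ℕ} (hp : p < L.length) (x : ℕ) :
    inBlock (L ++ [a]) p x ↔ inBlock L p x := by
  rw [inBlock, inBlock, List.take_append_of_le_length hp.le, List.take_append_of_le_length hp]

lemma inBlock_append_length (L : List ℕ) (a x : ℕ) :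
    inBlock (L ++ [a]) L.length x ↔ L.sum ≤ x ∧ x < L.sum + a := by
  rw [inBlock, List.take_append_of_le_length le_rfl, List.take_length,
    List.take_of_length_le (by simp)]
  simp

lemma lt_sum_of_inBlock {L : List ℕ} {p x : ℕ} (h : inBlock L p x) : x < L.sum :=
  h.2.trans_le (by
    conv_rhs => rw [← List.take_append_drop (p + 1) L, List.sum_append]
    exact Nat.le_add_right _ _)

lemma sameBlock_append (L : List ℕ) (a x y : ℕ) :
    sameBlock (L ++ [a]) x y ↔
      sameBlock L x y ∨ (L.sum ≤ x ∧ x < L.sum + a) ∧ (L.sum ≤ y ∧ y < L.sum + a) := by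
  constructor
  · rintro ⟨p, hp, hx, hy⟩
    obtain h | rfl : p < L.length ∨ p = L.length := by
      simp at hp; omega
    · rw [inBlock_append_of_lt L a h] at hx hy
      exact Or.inl ⟨p, h, hx, hy⟩
    · rw [inBlock_append_length] at hx hy
      exact Or.inr ⟨hx, hy⟩
  · rintro (⟨p, hp, hx, hy⟩ | ⟨hx, hy⟩)
    · refine ⟨p, by simp; omega, ?_, ?_⟩ <;> rwa [inBlock_append_of_lt L a hp]
    · refine ⟨L.length, by simp, ?_, ?_⟩ <;> rwa [inBlock_append_length]

/-- The blocks of `L` are the fibres of a labelling (by block index), and the count for `n = m` is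
the product of the `(i - 1)!`. -/
lemma exists_labelling (L : List ℕ) : ∃ f : ℕ → ℕ, (∀ x < L.sum, f x < L.length) ∧
    (∀ x < L.sum, ∀ y < L.sum, (sameBlock L x y ↔ f x = f y)) ∧
    Nat.card {σ : Equiv.Perm (Fin L.sum) // SeparatesLabels f L.sum σ} =
      (L.map fun x => (x - 1).factorial).prod := by
  induction L using List.reverseRecOn with
  | nil =>
    refine ⟨fun _ => 0, by simp, by simp, ?_⟩
    have (σ : Equiv.Perm (Fin ([] : List ℕ).sum)) :
        SeparatesLabels (fun _ => 0) ([] : List ℕ).sum σ :=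
      fun x => x.elim0
    rw [Nat.card_congr (Equiv.subtypeUnivEquiv this)]
    simp
  | append_singleton L a ih =>
    obtain ⟨f, hf, hblock, hcard⟩ := ih
    set g : ℕ → ℕ := fun x => if x < L.sum then f x else L.length with hg
    have hlt : ∀ x < L.sum, g x = f x := fun x hx => if_pos hx
    have hge : ∀ x, L.sum ≤ x → g x = L.length := fun x hx => if_neg hx.not_gt
    have hsum : (L ++ [a]).sum = L.sum + a := by simp
    refine ⟨g, ?_, ?_, ?_⟩
    · intro x _
      rw [List.length_append, List.length_singleton]
      rcases lt_or_ge x L.sum with h | h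
      · rw [hlt x h]; exact (hf x h).trans (Nat.lt_succ_self _)
      · rw [hge x h]; exact Nat.lt_succ_self _
    · intro x hx y hy
      rw [hsum] at hx hy
      rw [sameBlock_append]
      have hnot : sameBlock L x y → x < L.sum ∧ y < L.sum := fun ⟨p, _, h1, h2⟩ =>
        ⟨lt_sum_of_inBlock h1, lt_sum_of_inBlock h2⟩
      rcases lt_or_ge x L.sum with h | h <;> rcases lt_or_ge y L.sum with h' | h'
      · rw [hlt x h, hlt y h', ← hblock x h y h']
        exact or_iff_left (by omega)
      · rw [hlt x h, hge y h']
        have := hf x h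
        exact iff_of_false (by rintro (h1 | h1) <;> [have := hnot h1; skip] <;> omega) this.ne
      · rw [hge x h, hlt y h']
        have := hf y h'
        exact iff_of_false (by rintro (h1 | h1) <;> [have := hnot h1; skip] <;> omega) this.ne'
      · rw [hge x h, hge y h']
        exact iff_of_true (Or.inr ⟨⟨h, hx⟩, h', hy⟩) rfl
    · rw [hsum, count_append_block g L.sum L.length
        (fun x hx => by rw [hlt x hx]; exact (hf x hx).ne)
        hge, Nat.card_congr (Equiv.subtypeEquivRight (separatesLabels_congr hlt)), hcard]
      simp [mul_comm]

lemma count_mul_factorial (f : ℕ → ℕ) {m n : ℕ} (h : m ≤ n) :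
    Nat.card {σ : Equiv.Perm (Fin n) // SeparatesLabels f m σ} * m.factorial =
      n.factorial * Nat.card {σ : Equiv.Perm (Fin m) // SeparatesLabels f m σ} := by
  induction n, h using Nat.le_induction with
  | base => exact mul_comm _ _
  | succ n h ih => rw [count_succ_unlabelled f h, mul_assoc, ih, Nat.factorial_succ, mul_assoc]

/-- The number of strongly `I`-separated permutations of `S_n`, for a composition
`I = (i_1,…,i_k)` of `m ≤ n`, equals `n!·(i_1-1)!⋯(i_k-1)!/m!`. -/
theorem stmt12 (n m : ℕ) (L : List ℕ) (hL : ∀ x ∈ L, 0 < x) (hsum : L.sum = m)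
    (hmn : m ≤ n) :
    (Nat.card {σ : Equiv.Perm (Fin n) // IsStronglySeparated L σ} : ℚ)
      = (n.factorial : ℚ) * (L.map fun x => (x - 1).factorial).prod / m.factorial := by
  subst hsum
  obtain ⟨f, -, hblock, hcard⟩ := exists_labelling L
  have hsep (σ : Equiv.Perm (Fin n)) : IsStronglySeparated L σ ↔ SeparatesLabels f L.sum σ :=
    forall₄_congr fun x y hx hy => by rw [hblock x hx y hy]
  rw [Nat.card_congr (Equiv.subtypeEquivRight hsep), eq_div_iff (by positivity), ← hcard]
  exact_mod_cast count_mul_factorial f hmn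
end
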